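/- arXiv:1902.07426 — 2 statements merged into one kernel-verified Lean document; each statement's English description precedes it below -/
import Mathlib

section
/- For every ε ∈ (0,1/2] there exist constants C_ε, c_ε > 0 and n_0 such that the following holds for every n ≥ n_0 and every integer r with 1 ≤ r < (log* n)/5. Set m = ⌈C_ε·n·r·4^r/log^{(4r)} n⌉. For every product probability measure μ = μ_1 × ... × μ_r on ({0,1}^n)^r there exists a probability distribution ν supported on subsets of [n] of size at most m, depending only on μ and not on the protocol, such that for every f : ({0,1}^n)^r → {0,1} there exists b ∈ {0,1} with Pr_{B∼ν}[ I_B^b(f) ≥ 1 − ε ] ≥ (c_ε/(log(1/ε) + r))^r / n. -/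
open MeasureTheory
open scoped ENNReal

/-- An `(n,r)`-strategy for a coalition `B`: in round `i`, given the bits broadcast by the
players outside `B` in the first `i+1` rounds, it chooses the bits of the players in `B`
(coordinates outside `B` of the output are irrelevant). -/
def Strategy (n r : ℕ) (B : Finset (Fin n)) : Type :=
  (i : Fin r) → (Fin (i.val + 1) → ({j : Fin n // j ∉ B} → Bool)) → (Fin n → Bool)

/-- The transcript of the protocol when the good players broadcast according to `α` and the
coalition `B` follows strategy `π` (with rushing: in round `i` the coalition sees the good
players' round-`i` bits). -/
def execP {n r : ℕ} (B : Finset (Fin n)) (π : Strategy n r B)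
    (α : Fin r → Fin n → Bool) : Fin r → Fin n → Bool :=
  fun i j =>
    if j ∈ B then
      π i (fun k => fun j' =>
        α ⟨k.val, by have hk := k.isLt; have hi := i.isLt; omega⟩ j'.val) j
    else α i j

/-- `I_{π,B}^b(f)`: the probability that the output is `b` when the coalition `B` follows `π`.
The good players' bits are sampled from the product measure `⨂_i ⨂_j μs i j`; since the
transcript and the strategy only depend on the coordinates outside `B`, this agrees with
sampling only the coordinates outside `B`. -/
noncomputable def IPi {n r : ℕ} (μs : Fin r → Fin n → Measure Bool)
    (f : (Fin r → Fin n → Bool) → Bool) (B : Finset (Fin n)) (π : Strategy n r B)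
    (b : Bool) : ℝ≥0∞ :=
  (Measure.pi fun i => Measure.pi fun j => μs i j) {α | f (execP B π α) = b}

/-- `I_B^b(f)`: the influence of coalition `B` towards `b`, i.e. the supremum over strategies
of the probability that the output is `b`. -/
noncomputable def IB {n r : ℕ} (μs : Fin r → Fin n → Measure Bool)
    (f : (Fin r → Fin n → Bool) → Bool) (B : Finset (Fin n)) (b : Bool) : ℝ :=
  (⨆ π : Strategy n r B, IPi μs f B π b).toReal

/-- The `j`-times iterated base-2 logarithm. -/
noncomputable def iterLog : ℕ → ℝ → ℝ
  | 0, x => x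
  | (j+1), x => Real.logb 2 (iterLog j x)

/-- `log* x`: the least `j` with `log^{(j)} x ≤ 1`. -/
noncomputable def logStar (x : ℝ) : ℕ := sInf {j : ℕ | iterLog j x ≤ 1}

/-!
The rounds are treated from the last one to the first. Suppose that against every fixed string of
the first round, a random coalition for the later rounds wins for some output `b` with probability
at least `1 / X`. We want a sparse random coalition for the first round, drawn independently, that
for one fixed `b` brings about a string from which the later coalition wins for `b`, with only a
slightly larger error and with probability at least `1 / G X`. Iterating `G` over the `r` rounds,
and noting that `G` grows more slowly than a four-fold exponential, costs `4 * r` logarithms.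

For one round, write each bit as a function of a bit both of whose values have probability at least
`η` and of an independent bit that is `true` with probability at most `η`.

* Bits of the first kind: let a random sparse set of players grow slowly in density. As long as it
  together with a set `A` does not almost surely suffice to bring about an event, the inequality of
  Falik and Samorodnitsky (in the spirit of Kahn, Kalai and Linial) gives either an influential
  player, who is put into `A`, or a large total influence, which makes the success probability grow
  with the density. Hence `A` stays bounded, and a bounded number of random blocks of players
  contains it with positive probability.
* Bits of the second kind: the coalition consists of the players holding a `true` in one of several
  independent samples of the round. The disjunction of the samples is itself a round string, so it
  is good for some `b`; if the later coalition wins from it but a sample cannot be moved to such a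
  string by the present coalition, then the other samples could enlarge the coalition so it can.
  The resulting potential is bounded, so for some number of samples a further batch adds little,
  and then the coalition already succeeds.
-/

namespace CoinFlip

/-! ### Finite weights -/

section FiniteWeights

/-- The expectation of `F` under the weight function `w` on a finite type; a probability
distribution is a weight function in `stdSimplex ℝ Λ`. -/
noncomputable def mean {Λ : Type*} [Fintype Λ] (w F : Λ → ℝ) : ℝ := ∑ a, w a * F a

open Classical in
/-- The real-valued indicator of a proposition. -/
noncomputable def ind (P : Prop) : ℝ := if P then 1 else 0

/-- The probability of the event `P` under the weight function `w`. -/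
noncomputable def prob {Λ : Type*} [Fintype Λ] (w : Λ → ℝ) (P : Λ → Prop) : ℝ :=
  mean w fun a => ind (P a)

/-- The weight function of independent coordinates, the `j`-th one distributed as `w j`. -/
noncomputable def piWeight {ι Ω : Type*} [Fintype ι] (w : ι → Ω → ℝ) (x : ι → Ω) : ℝ :=
  ∏ j, w j (x j)

/-- The weight function of an independent pair. -/
def prodWeight {Λ Λ' : Type*} (w : Λ → ℝ) (w' : Λ' → ℝ) (p : Λ × Λ') : ℝ := w p.1 * w' p.2

theorem ind_of_true {P : Prop} (h : P) : ind P = 1 := if_pos h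

theorem ind_of_false {P : Prop} (h : ¬P) : ind P = 0 := if_neg h

theorem ind_nonneg (P : Prop) : 0 ≤ ind P := by unfold ind; split_ifs <;> norm_num

theorem ind_le_one (P : Prop) : ind P ≤ 1 := by unfold ind; split_ifs <;> norm_num

theorem ind_mono {P Q : Prop} (h : P → Q) : ind P ≤ ind Q := by
  by_cases hP : P
  · rw [ind_of_true hP, ind_of_true (h hP)]
  · rw [ind_of_false hP]; exact ind_nonneg Q

theorem ind_and (P Q : Prop) : ind (P ∧ Q) = ind P * ind Q := by
  by_cases hP : P <;> by_cases hQ : Q <;> simp [ind, hP, hQ]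

theorem ind_not (P : Prop) : ind (¬P) = 1 - ind P := by
  by_cases hP : P <;> simp [ind, hP]

variable {Λ Λ' : Type*} [Fintype Λ] [Fintype Λ'] {w : Λ → ℝ} {w' : Λ' → ℝ}

theorem mean_mono (hw : w ∈ stdSimplex ℝ Λ) {F G : Λ → ℝ} (h : ∀ a, F a ≤ G a) :
    mean w F ≤ mean w G :=
  Finset.sum_le_sum fun a _ => mul_le_mul_of_nonneg_left (h a) (hw.1 a)

theorem mean_const (hw : w ∈ stdSimplex ℝ Λ) (c : ℝ) : mean w (fun _ => c) = c := by
  rw [mean, ← Finset.sum_mul, hw.2, one_mul]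

theorem mean_add (F G : Λ → ℝ) : mean w (fun a => F a + G a) = mean w F + mean w G := by
  simp only [mean, mul_add, Finset.sum_add_distrib]

theorem mean_sub (F G : Λ → ℝ) : mean w (fun a => F a - G a) = mean w F - mean w G := by
  simp only [mean, mul_sub, Finset.sum_sub_distrib]

theorem mean_const_mul (c : ℝ) (F : Λ → ℝ) : mean w (fun a => c * F a) = c * mean w F := by
  simp only [mean, Finset.mul_sum, mul_left_comm]

theorem mean_sum {κ : Type*} (s : Finset κ) (F : κ → Λ → ℝ) :
    mean w (fun a => ∑ k ∈ s, F k a) = ∑ k ∈ s, mean w (F k) := by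
  simp only [mean, Finset.mul_sum]
  exact Finset.sum_comm

theorem mean_nonneg (hw : w ∈ stdSimplex ℝ Λ) {F : Λ → ℝ} (h : ∀ a, 0 ≤ F a) : 0 ≤ mean w F :=
  Finset.sum_nonneg fun a _ => mul_nonneg (hw.1 a) (h a)

theorem mean_comm (F : Λ → Λ' → ℝ) :
    mean w (fun a => mean w' (F a)) = mean w' (fun b => mean w fun a => F a b) := by
  simp only [mean, Finset.mul_sum, mul_left_comm]
  exact Finset.sum_comm

theorem mean_prodWeight (F : Λ × Λ' → ℝ) :
    mean (prodWeight w w') F = mean w (fun a => mean w' fun b => F (a, b)) := by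
  simp only [mean, prodWeight, Fintype.sum_prod_type, Finset.mul_sum, mul_assoc]

theorem prodWeight_mem_stdSimplex (hw : w ∈ stdSimplex ℝ Λ) (hw' : w' ∈ stdSimplex ℝ Λ') :
    prodWeight w w' ∈ stdSimplex ℝ (Λ × Λ') := by
  refine ⟨fun a => mul_nonneg (hw.1 _) (hw'.1 _), ?_⟩
  simp only [prodWeight, Fintype.sum_prod_type, ← Finset.mul_sum, hw'.2, mul_one, hw.2]

theorem piWeight_mem_stdSimplex {ι Ω : Type*} [Fintype ι] [DecidableEq ι] [Fintype Ω]
    {w : ι → Ω → ℝ} (hw : ∀ j, w j ∈ stdSimplex ℝ Ω) : piWeight w ∈ stdSimplex ℝ (ι → Ω) := by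
  refine ⟨fun a => Finset.prod_nonneg fun j _ => (hw j).1 _, ?_⟩
  simp only [piWeight, ← Fintype.prod_sum]
  exact Finset.prod_eq_one fun j _ => (hw j).2

theorem prob_nonneg (hw : w ∈ stdSimplex ℝ Λ) (P : Λ → Prop) : 0 ≤ prob w P :=
  mean_nonneg hw fun _ => ind_nonneg _

theorem prob_le_one (hw : w ∈ stdSimplex ℝ Λ) (P : Λ → Prop) : prob w P ≤ 1 :=
  (mean_mono hw fun _ => ind_le_one _).trans (mean_const hw 1).le

theorem prob_mono (hw : w ∈ stdSimplex ℝ Λ) {P Q : Λ → Prop} (h : ∀ a, P a → Q a) :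
    prob w P ≤ prob w Q :=
  mean_mono hw fun a => ind_mono (h a)

theorem prob_not (hw : w ∈ stdSimplex ℝ Λ) (P : Λ → Prop) :
    prob w (fun a => ¬P a) = 1 - prob w P := by
  simp only [prob, ind_not]
  rw [mean_sub, mean_const hw]

theorem prob_sub_prob_not_le_prob_and (hw : w ∈ stdSimplex ℝ Λ) (P Q : Λ → Prop) :
    prob w P - prob w (fun a => ¬Q a) ≤ prob w (fun a => P a ∧ Q a) := by
  rw [prob, prob, ← mean_sub]
  refine mean_mono hw fun a => ?_
  by_cases hP : P a <;> by_cases hQ : Q a <;> simp [ind, hP, hQ]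

theorem mean_sub_le_prob_le (hw : w ∈ stdSimplex ℝ Λ) {F : Λ → ℝ} (hF : ∀ a, F a ≤ 1)
    {c : ℝ} (hc : 0 ≤ c) : mean w F - c ≤ prob w (fun a => c ≤ F a) := by
  have h : mean w F ≤ mean w (fun a => ind (c ≤ F a) + c) := by
    refine mean_mono hw fun a => ?_
    by_cases h : c ≤ F a
    · rw [ind_of_true h]; linarith [hF a]
    · rw [ind_of_false h]; linarith
  rw [mean_add, mean_const hw] at h
  exact sub_le_iff_le_add.2 h

theorem prob_lt_le_mean_div (hw : w ∈ stdSimplex ℝ Λ) {F : Λ → ℝ} (hF : ∀ a, 0 ≤ F a)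
    {c : ℝ} (hc : 0 < c) : prob w (fun a => c < F a) ≤ mean w F / c := by
  rw [le_div_iff₀ hc, mul_comm, prob, ← mean_const_mul]
  refine mean_mono hw fun a => ?_
  by_cases h : c < F a
  · rw [ind_of_true h]; linarith
  · rw [ind_of_false h, mul_zero]; exact hF a

theorem mean_mul_sq_le (hw : w ∈ stdSimplex ℝ Λ) (F G : Λ → ℝ) :
    (mean w fun a => F a * G a) ^ 2 ≤ (mean w fun a => F a ^ 2) * mean w fun a => G a ^ 2 := by
  have hmul : ∀ a, w a * (F a * G a) = √(w a) * F a * (√(w a) * G a) := fun a => by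
    linear_combination (-F a * G a) * Real.mul_self_sqrt (hw.1 a)
  have hsq : ∀ (F : Λ → ℝ) (a : Λ), w a * F a ^ 2 = (√(w a) * F a) ^ 2 := fun F a => by
    rw [mul_pow, Real.sq_sqrt (hw.1 a)]
  simp only [mean, hmul, hsq]
  exact Finset.sum_mul_sq_le_sq_mul_sq _ _ _

theorem sqrt_mean_sq_sub_sq_le (hw : w ∈ stdSimplex ℝ Λ) (F G : Λ → ℝ) :
    (√(mean w fun a => F a ^ 2) - √(mean w fun a => G a ^ 2)) ^ 2
      ≤ mean w fun a => (F a - G a) ^ 2 := by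
  have hF : 0 ≤ mean w fun a => F a ^ 2 := mean_nonneg hw fun a => sq_nonneg _
  have hG : 0 ≤ mean w fun a => G a ^ 2 := mean_nonneg hw fun a => sq_nonneg _
  have hexpand : (mean w fun a => (F a - G a) ^ 2)
      = (mean w fun a => F a ^ 2) + (mean w fun a => G a ^ 2)
        - 2 * mean w fun a => F a * G a := by
    rw [← mean_add, ← mean_const_mul, ← mean_sub]
    congr 1; ext a; ring
  have hcross : (mean w fun a => F a * G a)
      ≤ √(mean w fun a => F a ^ 2) * √(mean w fun a => G a ^ 2) := by
    rw [← Real.sqrt_mul hF]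
    exact Real.le_sqrt_of_sq_le (mean_mul_sq_le hw F G)
  rw [hexpand, sub_sq, Real.sq_sqrt hF, Real.sq_sqrt hG]
  linarith

theorem abs_mean_le (hw : w ∈ stdSimplex ℝ Λ) (F : Λ → ℝ) :
    |mean w F| ≤ mean w fun a => |F a| := by
  refine (Finset.abs_sum_le_sum_abs _ _).trans_eq (Finset.sum_congr rfl fun a _ => ?_)
  rw [abs_mul, abs_of_nonneg (hw.1 a)]

theorem mean_sq_sub_mean (hw : w ∈ stdSimplex ℝ Λ) (u : Λ → ℝ) :
    (mean w fun a => (u a - mean w u) ^ 2) = (mean w fun a => u a ^ 2) - mean w u ^ 2 := by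
  have h : ∀ b, (u b - mean w u) ^ 2 = u b ^ 2 + (-2 * mean w u * u b + mean w u ^ 2) := by
    intro b; ring
  simp only [h]
  rw [mean_add, mean_add, mean_const hw, mean_const_mul]
  ring

theorem mean_mean_sq_sub (hw : w ∈ stdSimplex ℝ Λ) (u : Λ → ℝ) :
    (mean w fun a => mean w fun b => (u a - u b) ^ 2)
      = 2 * mean w fun a => (u a - mean w u) ^ 2 := by
  have h : ∀ a, (mean w fun b => (u a - u b) ^ 2)
      = u a ^ 2 + (-2 * u a * mean w u + mean w fun b => u b ^ 2) := by
    intro a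
    rw [← mean_const hw (u a ^ 2), ← mean_const_mul, ← mean_add, ← mean_add]
    congr 1; ext b; ring
  have h' : ∀ a, -2 * u a * mean w u = -2 * mean w u * u a := fun a => by ring
  simp only [h, h']
  rw [mean_sq_sub_mean hw, mean_add, mean_add, mean_const_mul, mean_const hw]
  ring

theorem mean_abs_pos_of_mean_sq_pos (hw : w ∈ stdSimplex ℝ Λ) {F : Λ → ℝ}
    (h : 0 < mean w fun a => F a ^ 2) : 0 < mean w fun a => |F a| := by
  obtain ⟨a, -, ha⟩ := Finset.exists_ne_zero_of_sum_ne_zero h.ne'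
  have hF : 0 < |F a| := abs_pos.2 fun h0 => ha (by simp [h0])
  have hwa : 0 < w a := (hw.1 a).lt_of_ne' (left_ne_zero_of_mul ha)
  exact Finset.sum_pos' (fun b _ => mul_nonneg (hw.1 b) (abs_nonneg _))
    ⟨a, Finset.mem_univ a, mul_pos hwa hF⟩

end FiniteWeights

section PiWeight

variable {ι Ω Ω' : Type*} [Fintype ι] [DecidableEq ι] [Fintype Ω] [Fintype Ω']

theorem mean_piWeight_resample {w : ι → Ω → ℝ} (hw : ∀ j, w j ∈ stdSimplex ℝ Ω) (j : ι)
    (F : (ι → Ω) → ℝ) :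
    mean (piWeight w) (fun x => mean (w j) fun a => F (Function.update x j a))
      = mean (piWeight w) F := by
  set e := (Equiv.funSplitAt j Ω).symm with he
  have heval : ∀ a y i, e (a, y) i = if h : i = j then a else y ⟨i, h⟩ := by
    intro a y i
    by_cases h : i = j <;> simp [he, Equiv.funSplitAt, Equiv.piSplitAt, h]
  have hprod : ∀ a y, piWeight w (e (a, y)) = w j a * piWeight (fun i : {i // i ≠ j} => w i) y := by
    intro a y
    rw [piWeight, Fintype.prod_eq_mul_prod_subtype_ne _ j]
    simp only [heval, dif_pos, piWeight]
    exact congrArg _ (Finset.prod_congr rfl fun i _ => by rw [dif_neg i.2])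
  have hupdate : ∀ a b y, Function.update (e (a, y)) j b = e (b, y) := by
    intro a b y; ext i
    by_cases h : i = j
    · subst h; simp [heval]
    · simp [heval, h]
  have hsum : ∀ G : (ι → Ω) → ℝ, mean (piWeight w) G = mean (w j) fun a =>
      mean (piWeight fun i : {i // i ≠ j} => w i) fun y => G (e (a, y)) := by
    intro G
    simp only [mean, ← e.sum_comp, Fintype.sum_prod_type, hprod, Finset.mul_sum, mul_assoc]
  rw [hsum, hsum]
  simp only [hupdate]
  rw [mean_const (hw j), mean_comm]

theorem mean_piWeight_map (w : ι → Ω → ℝ) (w' : ι → Ω' → ℝ) (h : ι → Ω → Ω')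
    (hmap : ∀ j (u : Ω' → ℝ), mean (w j) (fun a => u (h j a)) = mean (w' j) u)
    (F : (ι → Ω') → ℝ) :
    mean (piWeight w) (fun x => F fun j => h j (x j)) = mean (piWeight w') F := by
  classical
  have hfiber : ∀ y : ι → Ω',
      mean (piWeight w) (fun x => if (fun j => h j (x j)) = y then 1 else 0) = piWeight w' y := by
    intro y
    have hfactor : ∀ x : ι → Ω, piWeight w x * (if (fun j => h j (x j)) = y then 1 else 0)
        = ∏ j, w j (x j) * if h j (x j) = y j then 1 else 0 := by
      intro x
      rw [Finset.prod_mul_distrib, Finset.prod_ite_zero]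
      simp [piWeight, funext_iff]
    simp only [mean, hfactor]
    rw [← Fintype.prod_sum fun j a => w j a * if h j a = y j then (1 : ℝ) else 0]
    refine Finset.prod_congr rfl fun j _ => ?_
    have := hmap j fun b => if b = y j then 1 else 0
    simpa [mean] using this
  simp only [mean, ← hfiber, Finset.sum_mul] at hfiber ⊢
  rw [Finset.sum_comm]
  exact Finset.sum_congr rfl fun x _ => by simp

theorem mean_piWeight_prodWeight (w : ι → Ω → ℝ) (w' : ι → Ω' → ℝ)
    (F : (ι → Ω) → (ι → Ω') → ℝ) :
    mean (piWeight fun j => prodWeight (w j) (w' j))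
        (fun x => F (fun j => (x j).1) fun j => (x j).2)
      = mean (piWeight w) fun x => mean (piWeight w') (F x) := by
  rw [← mean_prodWeight (F := fun p => F p.1 p.2), mean, mean,
    ← (Equiv.arrowProdEquivProdArrow ι (fun _ => Ω) fun _ => Ω').sum_comp]
  refine Finset.sum_congr rfl fun x _ => ?_
  simp only [piWeight, prodWeight, Finset.prod_mul_distrib, Equiv.arrowProdEquivProdArrow,
    Equiv.coe_fn_mk]

end PiWeight

/-! ### Influences and the Falik–Samorodnitsky inequality -/

section CoordinateMeans

variable {ι Ω : Type*} [Fintype ι] [DecidableEq ι] [Fintype Ω]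

/-- The average of `F` over the `j`-th coordinate. -/
noncomputable def coordMean (w : ι → Ω → ℝ) (j : ι) (F : (ι → Ω) → ℝ) (x : ι → Ω) : ℝ :=
  mean (w j) fun a => F (Function.update x j a)

/-- The average of `F` over the coordinates in `S`, i.e. its conditional expectation given the
coordinates outside `S`. -/
noncomputable def partialMean (w : ι → Ω → ℝ) (S : Finset ι) (F : (ι → Ω) → ℝ) (x : ι → Ω) : ℝ :=
  mean (piWeight w) fun y => F (S.piecewise y x)

/-- The part of `F` that depends on the `j`-th coordinate. -/
noncomputable def deviation (w : ι → Ω → ℝ) (j : ι) (F : (ι → Ω) → ℝ) (x : ι → Ω) : ℝ :=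
  F x - coordMean w j F x

/-- The `L²` influence of the `j`-th coordinate on `F`. -/
noncomputable def influence (w : ι → Ω → ℝ) (j : ι) (F : (ι → Ω) → ℝ) : ℝ :=
  mean (piWeight w) fun x => deviation w j F x ^ 2

variable {w : ι → Ω → ℝ}

theorem mean_coordMean (hw : ∀ j, w j ∈ stdSimplex ℝ Ω) (j : ι) (F : (ι → Ω) → ℝ) :
    mean (piWeight w) (coordMean w j F) = mean (piWeight w) F :=
  mean_piWeight_resample hw j F

theorem partialMean_empty (hw : ∀ j, w j ∈ stdSimplex ℝ Ω) (F : (ι → Ω) → ℝ) :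
    partialMean w ∅ F = F := by
  ext x
  simp only [partialMean, Finset.piecewise_empty]
  exact mean_const (piWeight_mem_stdSimplex hw) _

theorem partialMean_univ (F : (ι → Ω) → ℝ) (x : ι → Ω) :
    partialMean w Finset.univ F x = mean (piWeight w) F := by
  simp only [partialMean, Finset.piecewise_univ]

theorem partialMean_coordMean (hw : ∀ j, w j ∈ stdSimplex ℝ Ω) (S : Finset ι) (j : ι)
    (F : (ι → Ω) → ℝ) : partialMean w S (coordMean w j F) = partialMean w (insert j S) F := by
  have hupdate : ∀ (x y : ι → Ω) (a : Ω),
      (insert j S).piecewise (Function.update y j a) x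
        = Function.update (S.piecewise y x) j a := by
    intro x y a; ext i
    by_cases h : i = j
    · subst h; simp
    · by_cases hi : i ∈ S <;> simp [h, hi]
  ext x
  rw [partialMean, partialMean,
    ← mean_piWeight_resample hw j fun y => F ((insert j S).piecewise y x)]
  simp only [hupdate]
  rfl

theorem coordMean_partialMean (hw : ∀ j, w j ∈ stdSimplex ℝ Ω) (S : Finset ι) (j : ι)
    (F : (ι → Ω) → ℝ) : coordMean w j (partialMean w S F) = partialMean w (insert j S) F := by
  by_cases hj : j ∈ S
  · have hconst : ∀ (x y : ι → Ω) (a : Ω),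
        S.piecewise y (Function.update x j a) = S.piecewise y x := by
      intro x y a; ext i
      by_cases hi : i ∈ S
      · simp [hi]
      · simp [hi, ne_of_mem_of_not_mem hj hi |>.symm]
    ext x
    rw [Finset.insert_eq_of_mem hj]
    simp only [coordMean, partialMean, hconst]
    exact mean_const (hw j) _
  · rw [← partialMean_coordMean hw]
    ext x
    simp only [coordMean, partialMean, Finset.update_piecewise_of_notMem _ _ _ hj]
    exact mean_comm _

theorem mean_partialMean (hw : ∀ j, w j ∈ stdSimplex ℝ Ω) (S : Finset ι) (F : (ι → Ω) → ℝ) :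
    mean (piWeight w) (partialMean w S F) = mean (piWeight w) F := by
  induction S using Finset.induction_on with
  | empty => rw [partialMean_empty hw]
  | insert j S _ ih => rw [← coordMean_partialMean hw, mean_coordMean hw, ih]

theorem mean_abs_partialMean_le (hw : ∀ j, w j ∈ stdSimplex ℝ Ω) (S : Finset ι)
    (F : (ι → Ω) → ℝ) :
    (mean (piWeight w) fun x => |partialMean w S F x|) ≤ mean (piWeight w) fun x => |F x| := by
  rw [← mean_partialMean hw S fun x => |F x|]
  exact mean_mono (piWeight_mem_stdSimplex hw) fun x => abs_mean_le (piWeight_mem_stdSimplex hw) _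

theorem influence_nonneg (hw : ∀ j, w j ∈ stdSimplex ℝ Ω) (j : ι) (F : (ι → Ω) → ℝ) :
    0 ≤ influence w j F :=
  mean_nonneg (piWeight_mem_stdSimplex hw) fun _ => sq_nonneg _

theorem influence_eq_mean_sq_sub (hw : ∀ j, w j ∈ stdSimplex ℝ Ω) (j : ι) (F : (ι → Ω) → ℝ) :
    influence w j F = (mean (piWeight w) fun x => F x ^ 2)
      - mean (piWeight w) fun x => coordMean w j F x ^ 2 := by
  rw [influence, ← mean_coordMean hw j fun x => deviation w j F x ^ 2,
    ← mean_coordMean hw j fun x => F x ^ 2, ← mean_sub]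
  congr 1; ext x
  simp only [coordMean, deviation, Function.update_idem]
  exact mean_sq_sub_mean (hw j) fun a => F (Function.update x j a)

theorem mean_mean_sq_sub_update (hw : ∀ j, w j ∈ stdSimplex ℝ Ω) (j : ι) (F : (ι → Ω) → ℝ) :
    (mean (piWeight w) fun x => mean (w j) fun a => mean (w j) fun b =>
      (F (Function.update x j a) - F (Function.update x j b)) ^ 2) = 2 * influence w j F := by
  rw [influence, ← mean_coordMean hw j fun x => deviation w j F x ^ 2, ← mean_const_mul]
  congr 1; ext x
  simp only [coordMean, deviation, Function.update_idem]
  exact mean_mean_sq_sub (hw j) fun a => F (Function.update x j a)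

theorem mean_abs_deviation (hw : ∀ j, w j ∈ stdSimplex ℝ Ω) (j : ι) {H : (ι → Ω) → ℝ}
    (hH : ∀ x, H x = 0 ∨ H x = 1) :
    (mean (piWeight w) fun x => |deviation w j H x|) = 2 * influence w j H := by
  have hnonneg : ∀ x, 0 ≤ coordMean w j H x := fun x => mean_nonneg (hw j) fun a => by
    rcases hH (Function.update x j a) with h | h <;> rw [h]; norm_num
  have hle_one : ∀ x, coordMean w j H x ≤ 1 := fun x => by
    refine (mean_mono (hw j) (G := fun _ => 1) fun a => ?_).trans (mean_const (hw j) 1).le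
    rcases hH (Function.update x j a) with h | h <;> rw [h]; norm_num
  have habs : ∀ x, |deviation w j H x|
      = deviation w j H x ^ 2 + (coordMean w j H x - coordMean w j H x ^ 2) := by
    intro x; unfold deviation
    rcases hH x with h | h <;> rw [h]
    · rw [abs_of_nonpos (by linarith [hnonneg x])]; ring
    · rw [abs_of_nonneg (by linarith [hle_one x])]; ring
  have hsq : (mean (piWeight w) fun x => H x ^ 2) = mean (piWeight w) (coordMean w j H) := by
    rw [mean_coordMean hw]
    congr 1; ext x
    rcases hH x with h | h <;> rw [h] <;> norm_num
  simp only [habs]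
  rw [mean_add, mean_sub, ← hsq, ← influence_eq_mean_sq_sub hw, influence]
  ring

end CoordinateMeans

section LogSobolev

/-- The entropy functional `Ent(g) = E[g log g] - E[g] log E[g]`. -/
noncomputable def entropy {Λ : Type*} [Fintype Λ] (w g : Λ → ℝ) : ℝ :=
  (mean w fun a => g a * Real.log (g a)) - mean w g * Real.log (mean w g)

variable {Λ : Type*} [Fintype Λ] {w : Λ → ℝ}

theorem entropy_le_mean_sq_sub_div (hw : w ∈ stdSimplex ℝ Λ) {g : Λ → ℝ} (hg : ∀ a, 0 ≤ g a)
    {c : ℝ} (hc : 0 < c) : entropy w g ≤ mean w fun a => (g a - c) ^ 2 / c := by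
  have hmean : -(mean w g * Real.log (mean w g)) ≤ -mean w g * Real.log c - mean w g + c := by
    rcases (mean_nonneg hw hg).eq_or_lt with h | h
    · rw [← h]; simpa using hc.le
    · have hlog := Real.log_le_sub_one_of_pos (div_pos hc h)
      rw [Real.log_div hc.ne' h.ne'] at hlog
      have hmul := mul_le_mul_of_nonneg_left hlog h.le
      have : mean w g * (c / mean w g - 1) = c - mean w g := by field_simp
      nlinarith
  have hpoint : (mean w fun a => g a * Real.log (g a))
      ≤ mean w fun a => (g a - c) ^ 2 / c + ((Real.log c + 1) * g a - c) := by
    refine mean_mono hw fun a => ?_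
    rcases (hg a).eq_or_lt with h | h
    · rw [← h, Real.log_zero, sq, zero_sub, neg_mul_neg, mul_div_cancel_right₀ c hc.ne']
      linarith
    · have hlog := Real.log_le_sub_one_of_pos (div_pos h hc)
      rw [Real.log_div h.ne' hc.ne'] at hlog
      have hmul := mul_le_mul_of_nonneg_left hlog (hg a)
      have : (g a - c) ^ 2 / c = g a * (g a / c) - 2 * g a + c := by field_simp; ring
      rw [this]; nlinarith
  rw [mean_add, mean_sub, mean_const_mul, mean_const hw] at hpoint
  rw [entropy]
  linarith

theorem entropy_sq_le (hw : w ∈ stdSimplex ℝ Λ) {p : ℝ} (hp : 0 < p) (hwp : ∀ a, p ≤ w a)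
    {u : Λ → ℝ} (hu : ∀ a, 0 ≤ u a) :
    entropy w (fun a => u a ^ 2) ≤ 4 / p * mean w fun a => mean w fun b => (u a - u b) ^ 2 := by
  have : Nonempty Λ := not_isEmpty_iff.1 fun _ => by simpa using hw.2
  obtain ⟨a₀, hmax⟩ := Finite.exists_max u
  rcases (hu a₀).eq_or_lt with h | h
  · have hzero : ∀ a, u a = 0 := fun a => le_antisymm ((hmax a).trans h.ge) (hu a)
    simp [hzero, mean, entropy]
  · have hpoint : (mean w fun a => (u a ^ 2 - u a₀ ^ 2) ^ 2 / u a₀ ^ 2)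
        ≤ mean w fun a => 4 * (u a₀ - u a) ^ 2 := by
      refine mean_mono hw fun a => ?_
      rw [div_le_iff₀ (pow_pos h 2)]
      have hsum : (u a + u a₀) ^ 2 ≤ (2 * u a₀) ^ 2 :=
        pow_le_pow_left₀ (by linarith [hu a]) (by linarith [hmax a]) 2
      nlinarith [mul_le_mul_of_nonneg_left hsum (sq_nonneg (u a₀ - u a))]
    have hsingle : w a₀ * (mean w fun b => (u a₀ - u b) ^ 2)
        ≤ mean w fun a => mean w fun b => (u a - u b) ^ 2 :=
      Finset.single_le_sum (f := fun a => w a * mean w fun b => (u a - u b) ^ 2)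
        (fun a _ => mul_nonneg (hw.1 a) (mean_nonneg hw fun b => sq_nonneg _))
        (Finset.mem_univ a₀)
    have hmass := mul_le_mul_of_nonneg_right (hwp a₀)
      (mean_nonneg hw fun b => sq_nonneg (u a₀ - u b))
    refine (entropy_le_mean_sq_sub_div hw (fun a => sq_nonneg _) (pow_pos h 2)).trans
      (hpoint.trans ?_)
    rw [mean_const_mul, div_mul_eq_mul_div, le_div_iff₀ hp]
    linarith

theorem mean_sq_mul_log_le_entropy (hw : w ∈ stdSimplex ℝ Λ) {F : Λ → ℝ}
    (hF : 0 < mean w fun x => F x ^ 2) :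
    (mean w fun x => F x ^ 2)
        * Real.log ((mean w fun x => F x ^ 2) / (mean w fun x => |F x|) ^ 2)
      ≤ entropy w fun x => F x ^ 2 := by
  have hL1 := mean_abs_pos_of_mean_sq_pos hw hF
  rw [entropy]
  set N := mean w fun x => F x ^ 2
  set M := mean w fun x => |F x|
  set k := N / M
  have hk0 : 0 < k := div_pos hF hL1
  have hpoint : (mean w fun x => 2 * (Real.log k + 1) * F x ^ 2 - 2 * k * |F x|)
      ≤ mean w fun x => F x ^ 2 * Real.log (F x ^ 2) := by
    refine mean_mono hw fun x => ?_
    by_cases hx : F x = 0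
    · simp [hx]
    · have hx' : 0 < |F x| := abs_pos.2 hx
      have hlog := Real.log_le_sub_one_of_pos (div_pos hk0 hx')
      rw [Real.log_div hk0.ne' hx'.ne', Real.log_abs] at hlog
      have hmul := mul_le_mul_of_nonneg_left hlog (sq_nonneg (F x))
      have hsq : F x ^ 2 * (k / |F x| - 1) = k * |F x| - F x ^ 2 := by
        rw [← sq_abs]; field_simp
      rw [Real.log_pow]
      push_cast; nlinarith
  rw [mean_sub, mean_const_mul, mean_const_mul] at hpoint
  have hkM : k * M = N := div_mul_cancel₀ N hL1.ne'
  have hlogk : Real.log k = Real.log N - Real.log M := Real.log_div hF.ne' hL1.ne'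
  have hlogNM : Real.log (N / M ^ 2) = Real.log N - 2 * Real.log M := by
    rw [Real.log_div hF.ne' (pow_pos hL1 2).ne', Real.log_pow]; norm_num
  rw [hlogNM]; rw [hlogk] at hpoint
  nlinarith

variable {ι Ω : Type*} [Fintype ι] [DecidableEq ι] [Fintype Ω] {w : ι → Ω → ℝ}

theorem entropy_partialMean_sq_update_le (hw : ∀ j, w j ∈ stdSimplex ℝ Ω) {p : ℝ} (hp : 0 < p)
    (hwp : ∀ j a, p ≤ w j a) {S : Finset ι} {j : ι} (hj : j ∉ S) (F : (ι → Ω) → ℝ) (x : ι → Ω) :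
    entropy (w j) (fun a => partialMean w S (fun x => F x ^ 2) (Function.update x j a))
      ≤ 4 / p * partialMean w S (fun z => mean (w j) fun a => mean (w j) fun b =>
          (F (Function.update z j a) - F (Function.update z j b)) ^ 2) x := by
  have hpw := piWeight_mem_stdSimplex hw
  have hG : ∀ z, 0 ≤ partialMean w S (fun x => F x ^ 2) z := fun z =>
    mean_nonneg hpw fun y => sq_nonneg _
  have hone := entropy_sq_le (hw j) hp (hwp j)
    (u := fun a => √(partialMean w S (fun x => F x ^ 2) (Function.update x j a)))
    fun a => Real.sqrt_nonneg _
  simp only [Real.sq_sqrt (hG _)] at hone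
  refine hone.trans (mul_le_mul_of_nonneg_left ?_ (by positivity))
  rw [partialMean, mean_comm (w := piWeight w)]
  refine mean_mono (hw j) fun a => ?_
  rw [mean_comm (w := piWeight w)]
  refine mean_mono (hw j) fun b => ?_
  simp only [partialMean, Finset.update_piecewise_of_notMem _ _ _ hj]
  exact sqrt_mean_sq_sub_sq_le hpw _ _

theorem mean_mul_log_partialMean_sub_le (hw : ∀ j, w j ∈ stdSimplex ℝ Ω) {p : ℝ} (hp : 0 < p)
    (hwp : ∀ j a, p ≤ w j a) (F : (ι → Ω) → ℝ) (S : Finset ι) :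
    (mean (piWeight w) fun x => F x ^ 2 * Real.log (F x ^ 2))
        - (mean (piWeight w) fun x => partialMean w S (fun x => F x ^ 2) x
            * Real.log (partialMean w S (fun x => F x ^ 2) x))
      ≤ 8 / p * ∑ j ∈ S, influence w j F := by
  induction S using Finset.induction_on with
  | empty => rw [partialMean_empty hw]; simp
  | insert j S hj ih =>
    rw [Finset.sum_insert hj, mul_add, ← coordMean_partialMean hw]
    set G := partialMean w S fun x => F x ^ 2
    suffices h : (mean (piWeight w) fun x => G x * Real.log (G x))
        - (mean (piWeight w) fun x => coordMean w j G x * Real.log (coordMean w j G x))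
        ≤ 8 / p * influence w j F by linarith
    rw [← mean_coordMean hw j fun x => G x * Real.log (G x), ← mean_sub]
    refine (mean_mono (piWeight_mem_stdSimplex hw)
      (entropy_partialMean_sq_update_le hw hp hwp hj F)).trans_eq ?_
    rw [mean_const_mul, mean_partialMean hw, mean_mean_sq_sub_update hw]
    ring

theorem entropy_sq_le_sum_influence (hw : ∀ j, w j ∈ stdSimplex ℝ Ω) {p : ℝ} (hp : 0 < p)
    (hwp : ∀ j a, p ≤ w j a) (F : (ι → Ω) → ℝ) :
    entropy (piWeight w) (fun x => F x ^ 2) ≤ 8 / p * ∑ j, influence w j F := by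
  have h := mean_mul_log_partialMean_sub_le hw hp hwp F Finset.univ
  simp only [partialMean_univ] at h
  rwa [mean_const (piWeight_mem_stdSimplex hw)] at h

theorem mean_sq_le_of_mean_abs_le (hw : ∀ j, w j ∈ stdSimplex ℝ Ω) {p : ℝ} (hp : 0 < p)
    (hwp : ∀ j a, p ≤ w j a) {t : ℝ} (ht : 0 < t) (ht' : t < 1 / 2) {F : (ι → Ω) → ℝ}
    (hF : (mean (piWeight w) fun x => |F x|) ≤ 2 * t ^ 2) :
    (mean (piWeight w) fun x => F x ^ 2)
      ≤ t * (mean (piWeight w) fun x => |F x|)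
        + 8 / p / Real.log (1 / (2 * t)) * ∑ j, influence w j F := by
  have hpw := piWeight_mem_stdSimplex hw
  have hlog : 0 < Real.log (1 / (2 * t)) := Real.log_pos (by rw [lt_div_iff₀] <;> linarith)
  have hinf : 0 ≤ ∑ j, influence w j F := Finset.sum_nonneg fun j _ => influence_nonneg hw j F
  have hM : 0 ≤ t * mean (piWeight w) fun x => |F x| :=
    mul_nonneg ht.le (mean_nonneg hpw fun _ => abs_nonneg _)
  rcases le_or_gt (mean (piWeight w) fun x => F x ^ 2) (t * mean (piWeight w) fun x => |F x|)
    with hle | hlt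
  · have : 0 ≤ 8 / p / Real.log (1 / (2 * t)) * ∑ j, influence w j F := by positivity
    linarith
  · have hN : 0 < mean (piWeight w) fun x => F x ^ 2 := hM.trans_lt hlt
    have hL1 := mean_abs_pos_of_mean_sq_pos hpw hN
    have hent := (mean_sq_mul_log_le_entropy hpw hN).trans
      (entropy_sq_le_sum_influence hw hp hwp F)
    set N := mean (piWeight w) fun x => F x ^ 2
    set M := mean (piWeight w) fun x => |F x|
    have hratio : 1 / (2 * t) ≤ N / M ^ 2 := by
      rw [div_le_div_iff₀ (by positivity) (by positivity)]
      nlinarith [mul_le_mul_of_nonneg_left hF hL1.le, mul_lt_mul_of_pos_left hlt ht]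
    have hNlog : N * Real.log (1 / (2 * t)) ≤ 8 / p * ∑ j, influence w j F :=
      (mul_le_mul_of_nonneg_left (Real.log_le_log (by positivity) hratio) hN.le).trans hent
    have : N ≤ 8 / p / Real.log (1 / (2 * t)) * ∑ j, influence w j F := by
      rwa [div_mul_eq_mul_div, le_div_iff₀ hlog]
    linarith

end LogSobolev

section Martingale

theorem sum_filter_lt_sub_filter_le {ι : Type*} [LinearOrder ι] (g : Finset ι → ℝ) (s : Finset ι) :
    ∑ k ∈ s, (g (s.filter fun i => k < i) - g (s.filter fun i => k ≤ i)) = g ∅ - g s := by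
  induction s using Finset.induction_on_min with
  | empty => simp
  | insert a s ha ih =>
    have has : a ∉ s := fun h => lt_irrefl _ (ha a h)
    have hrest : ∀ k ∈ s, g ((insert a s).filter fun i => k < i)
          - g ((insert a s).filter fun i => k ≤ i)
        = g (s.filter fun i => k < i) - g (s.filter fun i => k ≤ i) := by
      intro k hk
      rw [Finset.filter_insert, Finset.filter_insert, if_neg (ha k hk).not_gt,
        if_neg (ha k hk).not_ge]
    have hlt : ((insert a s).filter fun i => a < i) = s := by
      rw [Finset.filter_insert, if_neg (lt_irrefl a), Finset.filter_true_of_mem ha]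
    have hle : ((insert a s).filter fun i => a ≤ i) = insert a s := by
      rw [Finset.filter_insert, if_pos le_rfl, Finset.filter_true_of_mem fun i hi => (ha i hi).le]
    rw [Finset.sum_insert has, Finset.sum_congr rfl hrest, ih, hlt, hle]
    ring

variable {ι Ω : Type*} [Fintype ι] [LinearOrder ι] [Fintype Ω]

/-- The `k`-th martingale difference of `H` when the coordinates are revealed in increasing
order. -/
noncomputable def martingaleDiff (w : ι → Ω → ℝ) (k : ι) (H : (ι → Ω) → ℝ) (x : ι → Ω) : ℝ :=
  partialMean w {i | k < i} H x - partialMean w {i | k ≤ i} H x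

variable {w : ι → Ω → ℝ}

theorem filter_le_eq_insert (k : ι) :
    (Finset.univ.filter fun i => k ≤ i) = insert k (Finset.univ.filter fun i => k < i) := by
  ext i
  simp [le_iff_eq_or_lt, eq_comm]

theorem martingaleDiff_eq (hw : ∀ j, w j ∈ stdSimplex ℝ Ω) (k : ι) (H : (ι → Ω) → ℝ) :
    martingaleDiff w k H = partialMean w {i | k < i} (deviation w k H) := by
  ext x
  rw [martingaleDiff, filter_le_eq_insert, ← partialMean_coordMean hw]
  exact (mean_sub _ _).symm

theorem mean_martingaleDiff_sq (hw : ∀ j, w j ∈ stdSimplex ℝ Ω) (k : ι) (H : (ι → Ω) → ℝ) :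
    (mean (piWeight w) fun x => martingaleDiff w k H x ^ 2)
      = (mean (piWeight w) fun x => partialMean w {i | k < i} H x ^ 2)
        - mean (piWeight w) fun x => partialMean w {i | k ≤ i} H x ^ 2 := by
  simp only [martingaleDiff, filter_le_eq_insert, ← coordMean_partialMean hw]
  exact influence_eq_mean_sq_sub hw k _

theorem sum_mean_martingaleDiff_sq (hw : ∀ j, w j ∈ stdSimplex ℝ Ω) (H : (ι → Ω) → ℝ) :
    ∑ k, (mean (piWeight w) fun x => martingaleDiff w k H x ^ 2)
      = (mean (piWeight w) fun x => H x ^ 2) - mean (piWeight w) H ^ 2 := by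
  simp only [mean_martingaleDiff_sq hw]
  rw [sum_filter_lt_sub_filter_le fun S => mean (piWeight w) fun x => partialMean w S H x ^ 2]
  simp only [partialMean_empty hw, partialMean_univ, mean_const (piWeight_mem_stdSimplex hw)]

theorem deviation_martingaleDiff (hw : ∀ j, w j ∈ stdSimplex ℝ Ω) (j k : ι) (H : (ι → Ω) → ℝ) :
    deviation w j (martingaleDiff w k H) = martingaleDiff w k (deviation w j H) := by
  have hcomm : ∀ S x, partialMean w S (deviation w j H) x
      = partialMean w S H x - coordMean w j (partialMean w S H) x := by
    intro S x
    rw [coordMean_partialMean hw, ← partialMean_coordMean hw]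
    exact mean_sub _ _
  ext x
  rw [martingaleDiff, hcomm, hcomm, deviation]
  simp only [coordMean, martingaleDiff, mean_sub]
  ring

theorem sum_influence_martingaleDiff_le (hw : ∀ j, w j ∈ stdSimplex ℝ Ω) (j : ι)
    (H : (ι → Ω) → ℝ) : ∑ k, influence w j (martingaleDiff w k H) ≤ influence w j H := by
  simp only [influence, deviation_martingaleDiff hw]
  rw [sum_mean_martingaleDiff_sq hw]
  exact sub_le_self _ (sq_nonneg _)

theorem mean_sq_sub_sq_mean_le (hw : ∀ j, w j ∈ stdSimplex ℝ Ω) {p : ℝ} (hp : 0 < p)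
    (hwp : ∀ j a, p ≤ w j a) {H : (ι → Ω) → ℝ} (hH : ∀ x, H x = 0 ∨ H x = 1) {t : ℝ}
    (ht : 0 < t) (ht' : t < 1 / 2) (hinf : ∀ j, influence w j H ≤ t ^ 2) :
    (mean (piWeight w) fun x => H x ^ 2) - mean (piWeight w) H ^ 2
      ≤ (2 * t + 8 / p / Real.log (1 / (2 * t))) * ∑ j, influence w j H := by
  have hlog : 0 < Real.log (1 / (2 * t)) := Real.log_pos (by rw [lt_div_iff₀] <;> linarith)
  have hL1 : ∀ k, (mean (piWeight w) fun x => |martingaleDiff w k H x|) ≤ 2 * influence w k H := by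
    intro k
    rw [martingaleDiff_eq hw, ← mean_abs_deviation hw k hH]
    exact mean_abs_partialMean_le hw _ _
  have hdiff : ∀ k, (mean (piWeight w) fun x => martingaleDiff w k H x ^ 2)
      ≤ 2 * t * influence w k H + 8 / p / Real.log (1 / (2 * t))
        * ∑ j, influence w j (martingaleDiff w k H) := by
    intro k
    have h := mean_sq_le_of_mean_abs_le hw hp hwp ht ht' ((hL1 k).trans (by linarith [hinf k]))
    linarith [mul_le_mul_of_nonneg_left (hL1 k) ht.le]
  have hswap : ∑ k, ∑ j, influence w j (martingaleDiff w k H) ≤ ∑ j, influence w j H := by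
    rw [Finset.sum_comm]
    exact Finset.sum_le_sum fun j _ => sum_influence_martingaleDiff_le hw j H
  rw [← sum_mean_martingaleDiff_sq hw]
  refine (Finset.sum_le_sum fun k _ => hdiff k).trans ?_
  rw [Finset.sum_add_distrib, ← Finset.mul_sum, ← Finset.mul_sum, add_mul]
  gcongr

/-- The Kahn–Kalai–Linial bound: an influence exceeding this value exists whenever all atoms have
weight at least `p`, the variance is at least `v` and the total influence is at most `K`. -/
noncomputable def influenceFloor (p v K : ℝ) : ℝ := 1 / 4 * Real.exp (-(34 * K / (p * v)))

theorem influenceFloor_pos (p v K : ℝ) : 0 < influenceFloor p v K := by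
  unfold influenceFloor; positivity

theorem exists_lt_influence (hw : ∀ j, w j ∈ stdSimplex ℝ Ω) {p : ℝ} (hp : 0 < p) (hp1 : p ≤ 1)
    (hwp : ∀ j a, p ≤ w j a) {H : (ι → Ω) → ℝ} (hH : ∀ x, H x = 0 ∨ H x = 1) {v K : ℝ}
    (hv : 0 < v) (hK : 0 < K) (hvar : v ≤ mean (piWeight w) H - mean (piWeight w) H ^ 2)
    (hsum : ∑ j, influence w j H ≤ K) :
    ∃ j, influenceFloor p v K < influence w j H := by
  by_contra! hsmall
  set y := 17 * K / (p * v) with hy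
  have hy0 : 0 < y := by positivity
  set t := 1 / 2 * Real.exp (-y) with ht
  have ht0 : 0 < t := by positivity
  have ht2 : t ^ 2 = influenceFloor p v K := by
    rw [influenceFloor, ht, mul_pow, ← Real.exp_nat_mul]
    congr 1
    · norm_num
    · congr 1; rw [hy]; push_cast; ring
  have hexp_lt : Real.exp (-y) < 1 := by rw [Real.exp_lt_one_iff]; linarith
  have hexp_le : Real.exp (-y) ≤ 1 / y := by
    rw [Real.exp_neg, ← one_div]
    exact one_div_le_one_div_of_le hy0 (by linarith [Real.add_one_le_exp y])
  have hsq : (mean (piWeight w) fun x => H x ^ 2) = mean (piWeight w) H := by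
    congr 1; ext x; rcases hH x with h | h <;> rw [h] <;> norm_num
  have hlog : Real.log (1 / (2 * t)) = y := by
    have : 2 * t = Real.exp (-y) := by rw [ht]; ring
    rw [this, one_div, ← Real.exp_neg, neg_neg, Real.log_exp]
  have hmain := mean_sq_sub_sq_mean_le hw hp hwp hH ht0 (by linarith)
    fun j => (hsmall j).trans ht2.ge
  rw [hsq, hlog] at hmain
  have hvle : v ≤ 9 / 17 * v :=
    calc v ≤ (2 * t + 8 / p / y) * ∑ j, influence w j H := hvar.trans hmain
      _ ≤ (2 * t + 8 / p / y) * K := by gcongr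
      _ ≤ (1 / y + 8 / p / y) * K := by gcongr; linarith
      _ = (p + 8) * v / 17 := by rw [hy]; field_simp
      _ ≤ 9 / 17 * v := by nlinarith
  linarith

end Martingale

/-! ### Coalitions that force an event: the greedy random walk -/

section Forcing

variable {ι : Type*}

/-- Changing the coordinates of `x` in `S` can bring about the event `g`. -/
def Reaches {Ω : Type*} (S : Finset ι) (x : ι → Ω) (g : (ι → Ω) → Prop) : Prop :=
  ∃ x' : ι → Ω, (∀ j, j ∉ S → x' j = x j) ∧ g x'

theorem Reaches.mono {Ω : Type*} {S S' : Finset ι} {x : ι → Ω} {g g' : (ι → Ω) → Prop}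
    (h : Reaches S x g) (hS : S ⊆ S') (hg : ∀ y, g y → g' y) : Reaches S' x g' :=
  h.imp fun _ hx' => ⟨fun j hj => hx'.1 j fun hj' => hj (hS hj'), hg _ hx'.2⟩

theorem Reaches.congr {Ω : Type*} {S : Finset ι} {x y : ι → Ω} {g : (ι → Ω) → Prop}
    (h : Reaches S x g) (hxy : ∀ j, j ∉ S → x j = y j) : Reaches S y g :=
  h.imp fun _ hx' => ⟨fun j hj => (hx'.1 j hj).trans (hxy j hj), hx'.2⟩

/-- The weight function of a `Bool` that is `true` with probability `s`. -/
noncomputable def bernWeight (s : ℝ) (b : Bool) : ℝ := if b then s else 1 - s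

theorem bernWeight_mem_stdSimplex {s : ℝ} (h0 : 0 ≤ s) (h1 : s ≤ 1) :
    bernWeight s ∈ stdSimplex ℝ Bool :=
  ⟨Bool.forall_bool.2 ⟨sub_nonneg.2 h1, h0⟩, by simp [bernWeight]⟩

/-- The weight functions of the bits `wx`, each paired with an independent mark that is `true` with
probability `s`. -/
noncomputable def markedWeight (wx : ι → Bool → ℝ) (s : ℝ) (j : ι) : Bool × Bool → ℝ :=
  prodWeight (bernWeight s) (wx j)

variable [Fintype ι]

/-- The set of indices at which `R` is `true`. -/
def trueSet (R : ι → Bool) : Finset ι := {j | R j = true}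

variable [DecidableEq ι]

/-- The indicator of `A` together with the marked coordinates being able to bring about `g`; each
coordinate carries its mark followed by its bit. -/
noncomputable def forceInd (g : (ι → Bool) → Prop) (A : Finset ι) (ξ : ι → Bool × Bool) : ℝ :=
  ind (Reaches (A ∪ trueSet fun j => (ξ j).1) (fun j => (ξ j).2) g)

/-- The probability that `A`, together with a random set containing every coordinate independently
with probability `s`, can bring about `g`. -/
noncomputable def forceProb (wx : ι → Bool → ℝ) (g : (ι → Bool) → Prop) (A : Finset ι) (s : ℝ) :
    ℝ :=
  mean (piWeight (markedWeight wx s)) (forceInd g A)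

variable {wx : ι → Bool → ℝ} {g : (ι → Bool) → Prop}

theorem forceInd_mono {A A' : Finset ι} (h : A ⊆ A') (ξ : ι → Bool × Bool) :
    forceInd g A ξ ≤ forceInd g A' ξ :=
  ind_mono fun hr => hr.mono (Finset.union_subset_union_left h) fun _ hy => hy

theorem forceInd_eq_zero_or_one (A : Finset ι) (ξ : ι → Bool × Bool) :
    forceInd g A ξ = 0 ∨ forceInd g A ξ = 1 := by
  unfold forceInd ind; split_ifs <;> simp

theorem forceInd_insert_update (A : Finset ι) (j : ι) (ξ : ι → Bool × Bool) (a : Bool × Bool) :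
    forceInd g (insert j A) (Function.update ξ j a) = forceInd g (insert j A) ξ := by
  have hset : insert j A ∪ trueSet (fun i => (Function.update ξ j a i).1)
      = insert j A ∪ trueSet fun i => (ξ i).1 := by
    ext i
    by_cases h : i = j
    · subst h; simp
    · simp [trueSet, h]
  have hagree : ∀ i ∉ insert j A ∪ trueSet (fun i => (ξ i).1),
      (Function.update ξ j a i).2 = (ξ i).2 := by
    intro i hi
    rw [Function.update_of_ne]
    rintro rfl
    exact hi (Finset.mem_union_left _ (Finset.mem_insert_self i A))
  unfold forceInd
  rw [hset]
  congr 1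
  exact propext ⟨fun h => h.congr hagree, fun h => h.congr fun i hi => (hagree i hi).symm⟩

theorem piWeight_markedWeight_mem_stdSimplex (hw : ∀ j, wx j ∈ stdSimplex ℝ Bool) {s : ℝ}
    (h0 : 0 ≤ s) (h1 : s ≤ 1) :
    piWeight (markedWeight wx s) ∈ stdSimplex ℝ (ι → Bool × Bool) :=
  piWeight_mem_stdSimplex fun j =>
    prodWeight_mem_stdSimplex (bernWeight_mem_stdSimplex h0 h1) (hw j)

theorem piWeight_bernWeight_mem_stdSimplex {s : ℝ} (h0 : 0 ≤ s) (h1 : s ≤ 1) :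
    piWeight (fun _ : ι => bernWeight s) ∈ stdSimplex ℝ (ι → Bool) :=
  piWeight_mem_stdSimplex fun _ => bernWeight_mem_stdSimplex h0 h1

theorem forceProb_nonneg (hw : ∀ j, wx j ∈ stdSimplex ℝ Bool) {s : ℝ} (h0 : 0 ≤ s) (h1 : s ≤ 1)
    (A : Finset ι) : 0 ≤ forceProb wx g A s :=
  prob_nonneg (piWeight_markedWeight_mem_stdSimplex hw h0 h1) _

theorem forceProb_le_one (hw : ∀ j, wx j ∈ stdSimplex ℝ Bool) {s : ℝ} (h0 : 0 ≤ s) (h1 : s ≤ 1)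
    (A : Finset ι) : forceProb wx g A s ≤ 1 :=
  prob_le_one (piWeight_markedWeight_mem_stdSimplex hw h0 h1) _

theorem forceProb_mono (hw : ∀ j, wx j ∈ stdSimplex ℝ Bool) {s : ℝ} (h0 : 0 ≤ s) (h1 : s ≤ 1)
    {A A' : Finset ι} (h : A ⊆ A') : forceProb wx g A s ≤ forceProb wx g A' s :=
  mean_mono (piWeight_markedWeight_mem_stdSimplex hw h0 h1) (forceInd_mono h)

theorem forceProb_eq_mean_prob (wx : ι → Bool → ℝ) (g : (ι → Bool) → Prop) (A : Finset ι) (s : ℝ) :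
    forceProb wx g A s = mean (piWeight fun _ => bernWeight s) fun R =>
      prob (piWeight wx) fun x => Reaches (A ∪ trueSet R) x g :=
  mean_piWeight_prodWeight (fun _ => bernWeight s) wx
    fun R x => ind (Reaches (A ∪ trueSet R) x g)

theorem prob_le_forceProb (hw : ∀ j, wx j ∈ stdSimplex ℝ Bool) {s : ℝ} (h0 : 0 ≤ s) (h1 : s ≤ 1)
    (A : Finset ι) : prob (piWeight wx) g ≤ forceProb wx g A s := by
  have hb := piWeight_bernWeight_mem_stdSimplex (ι := ι) h0 h1
  rw [forceProb_eq_mean_prob, ← mean_const hb (prob (piWeight wx) g)]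
  exact mean_mono hb fun R => prob_mono (piWeight_mem_stdSimplex hw)
    fun x hx => ⟨x, fun _ _ => rfl, hx⟩

theorem influence_forceInd_le (hw : ∀ j, wx j ∈ stdSimplex ℝ Bool) {s : ℝ} (h0 : 0 ≤ s)
    (h1 : s ≤ 1) (A : Finset ι) (j : ι) :
    influence (markedWeight wx s) j (forceInd g A)
      ≤ forceProb wx g (insert j A) s - forceProb wx g A s := by
  have hW : ∀ j, markedWeight wx s j ∈ stdSimplex ℝ (Bool × Bool) := fun j =>
    prodWeight_mem_stdSimplex (bernWeight_mem_stdSimplex h0 h1) (hw j)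
  have hsq : (mean (piWeight (markedWeight wx s)) fun ξ => forceInd g A ξ ^ 2)
      = forceProb wx g A s := by
    rw [forceProb]; congr 1; ext ξ
    rcases forceInd_eq_zero_or_one (g := g) A ξ with h | h <;> rw [h] <;> norm_num
  rw [influence_eq_mean_sq_sub hW, hsq, forceProb, forceProb,
    ← mean_coordMean hW j (forceInd g A), ← mean_sub, ← mean_sub]
  refine mean_mono (piWeight_mem_stdSimplex hW) fun ξ => ?_
  have hle : coordMean (markedWeight wx s) j (forceInd g A) ξ ≤ forceInd g (insert j A) ξ := by
    rw [← mean_const (hW j) (forceInd g (insert j A) ξ)]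
    refine mean_mono (hW j) fun a => ?_
    rw [← forceInd_insert_update A j ξ a]
    exact forceInd_mono (Finset.subset_insert _ _) _
  have hnonneg : 0 ≤ coordMean (markedWeight wx s) j (forceInd g A) ξ :=
    mean_nonneg (hW j) fun a => ind_nonneg _
  rcases forceInd_eq_zero_or_one (g := g) (insert j A) ξ with h | h <;> rw [h] at hle ⊢ <;>
    nlinarith [sq_nonneg (1 - coordMean (markedWeight wx s) j (forceInd g A) ξ)]

theorem forceProb_union_trueSet (wx : ι → Bool → ℝ) (g : (ι → Bool) → Prop) (A : Finset ι)
    (s σ : ℝ) :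
    (mean (piWeight fun _ => bernWeight σ) fun R => forceProb wx g (A ∪ trueSet R) s)
      = forceProb wx g A (1 - (1 - s) * (1 - σ)) := by
  unfold forceProb
  rw [← mean_piWeight_prodWeight (fun _ => bernWeight σ) (markedWeight wx s)
      fun R ξ => forceInd g (A ∪ trueSet R) ξ,
    ← mean_piWeight_map (fun j => prodWeight (bernWeight σ) (markedWeight wx s j))
      (markedWeight wx (1 - (1 - s) * (1 - σ))) fun _ p => (p.1 || p.2.1, p.2.2)]
  · congr 1; ext x
    have hunion : A ∪ trueSet (fun j => ((x j).1 || (x j).2.1))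
        = A ∪ trueSet (fun j => (x j).1) ∪ trueSet fun j => (x j).2.1 := by
      ext i; simp [trueSet]
    simp only [forceInd, hunion]
  · intro j u
    simp only [mean, Fintype.sum_prod_type, Fintype.sum_bool, prodWeight, markedWeight, bernWeight,
      Bool.or_true, Bool.or_false, if_true, Bool.false_eq_true, if_false]
    ring

theorem half_le_piWeight_bernWeight_singleton {σ : ℝ} (h0 : 0 ≤ σ)
    (hσ : σ * (2 * Fintype.card ι) ≤ 1) (j : ι) :
    σ / 2 ≤ piWeight (fun _ => bernWeight σ) fun i => decide (i = j) := by
  have hcard : 1 ≤ Fintype.card ι := Fintype.card_pos_iff.2 ⟨j⟩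
  have hcard' : (1 : ℝ) ≤ Fintype.card ι := mod_cast hcard
  have hσ1 : σ ≤ 1 / 2 := by nlinarith
  have hothers : ∏ i ∈ Finset.univ.erase j, bernWeight σ (decide (i = j))
      = (1 - σ) ^ (Fintype.card ι - 1) := by
    rw [Finset.prod_congr rfl (g := fun _ => 1 - σ)]
    · simp
    · intro i hi; simp [bernWeight, Finset.ne_of_mem_erase hi]
  have hbernoulli := one_add_mul_le_pow (a := -σ) (by linarith) (Fintype.card ι - 1)
  rw [Nat.cast_sub hcard, ← sub_eq_add_neg] at hbernoulli
  push_cast at hbernoulli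
  have hhalf : 1 / 2 ≤ (1 - σ) ^ (Fintype.card ι - 1) := by nlinarith
  rw [piWeight, ← Finset.mul_prod_erase Finset.univ _ (Finset.mem_univ j), hothers,
    decide_eq_true rfl, bernWeight, if_pos rfl]
  linarith [mul_le_mul_of_nonneg_left hhalf h0]

theorem forceProb_add_le (hw : ∀ j, wx j ∈ stdSimplex ℝ Bool) {s σ : ℝ} (h0 : 0 ≤ s) (h1 : s ≤ 1)
    (hσ0 : 0 ≤ σ) (hσ1 : σ ≤ 1) (hσ : σ * (2 * Fintype.card ι) ≤ 1) (A : Finset ι) :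
    forceProb wx g A s
        + σ / 2 * ∑ j, (forceProb wx g (insert j A) s - forceProb wx g A s)
      ≤ forceProb wx g A (1 - (1 - s) * (1 - σ)) := by
  have hb := piWeight_bernWeight_mem_stdSimplex (ι := ι) hσ0 hσ1
  set gain : (ι → Bool) → ℝ := fun R => forceProb wx g (A ∪ trueSet R) s - forceProb wx g A s
    with hgain
  have hgain_nonneg : ∀ R, 0 ≤ gain R := fun R =>
    sub_nonneg.2 (forceProb_mono hw h0 h1 Finset.subset_union_left)
  have hinj : Function.Injective fun (j i : ι) => decide (i = j) := fun j j' h => by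
    simpa using congrFun h j
  have hsingletons : ∑ j, piWeight (fun _ => bernWeight σ) (fun i => decide (i = j))
      * gain (fun i => decide (i = j)) ≤ mean (piWeight fun _ => bernWeight σ) gain := by
    rw [← Finset.sum_image (f := fun R => piWeight (fun _ => bernWeight σ) R * gain R)
      fun _ _ _ _ h => hinj h]
    exact Finset.sum_le_sum_of_subset_of_nonneg (Finset.subset_univ _)
      fun R _ _ => mul_nonneg (hb.1 R) (hgain_nonneg R)
  have hgain_singleton : ∀ j, gain (fun i => decide (i = j))
      = forceProb wx g (insert j A) s - forceProb wx g A s := by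
    intro j
    have : A ∪ trueSet (fun i => decide (i = j)) = insert j A := by
      ext i; simp [trueSet, or_comm]
    simp only [hgain, this]
  have hmean : mean (piWeight fun _ => bernWeight σ) gain
      = forceProb wx g A (1 - (1 - s) * (1 - σ)) - forceProb wx g A s := by
    rw [hgain, mean_sub, mean_const hb, forceProb_union_trueSet]
  rw [← le_sub_iff_add_le', ← hmean]
  refine le_trans ?_ hsingletons
  rw [Finset.mul_sum]
  refine Finset.sum_le_sum fun j _ => ?_
  rw [← hgain_singleton]
  exact mul_le_mul_of_nonneg_right (half_le_piWeight_bernWeight_singleton hσ0 hσ j)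
    (hgain_nonneg _)

end Forcing

section Walk

/-- The density after adding `i` times a random set of density `1 / (2 * n)` to a random set of
density `s₀`. -/
noncomputable def level (s₀ : ℝ) (n i : ℕ) : ℝ := 1 - (1 - s₀) * (1 - 1 / (2 * n)) ^ i

variable {n : ℕ} {s₀ : ℝ}

theorem one_div_two_mul_le_one (n : ℕ) : 1 / (2 * (n : ℝ)) ≤ 1 := by
  rcases n.eq_zero_or_pos with rfl | hn
  · simp
  · rw [div_le_one (by positivity)]
    have : (1 : ℝ) ≤ n := mod_cast hn
    linarith

theorem level_le (h0 : 0 ≤ s₀) (h1 : s₀ ≤ 1) (n i : ℕ) : level s₀ n i ≤ s₀ + i / (2 * n) := by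
  have hpow := one_add_mul_le_pow (a := -(1 / (2 * (n : ℝ))))
    (by linarith [one_div_two_mul_le_one n]) i
  have hi : (0 : ℝ) ≤ i / (2 * n) := by positivity
  have hneg : (i : ℝ) * -(1 / (2 * n)) = -(i / (2 * n)) := by ring
  rw [← sub_eq_add_neg, hneg] at hpow
  unfold level
  nlinarith

theorem le_level (h1 : s₀ ≤ 1) (n i : ℕ) : s₀ ≤ level s₀ n i := by
  have hpow : (1 - 1 / (2 * (n : ℝ))) ^ i ≤ 1 :=
    pow_le_one₀ (by linarith [one_div_two_mul_le_one n]) (sub_le_self _ (by positivity))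
  unfold level
  nlinarith

theorem level_le_one (h1 : s₀ ≤ 1) (n i : ℕ) : level s₀ n i ≤ 1 := by
  have hpow : 0 ≤ (1 - 1 / (2 * (n : ℝ))) ^ i :=
    pow_nonneg (by linarith [one_div_two_mul_le_one n]) _
  unfold level
  nlinarith

theorem level_succ (s₀ : ℝ) (n i : ℕ) :
    level s₀ n (i + 1) = 1 - (1 - level s₀ n i) * (1 - 1 / (2 * n)) := by
  unfold level; ring

variable {wx : Fin n → Bool → ℝ} {g : (Fin n → Bool) → Prop}

theorem exists_influenceFloor_lt_forceProb_sub (hw : ∀ j, wx j ∈ stdSimplex ℝ Bool) {s η v K : ℝ}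
    (hη : 0 < η) (hη1 : η ≤ 1) (hwη : ∀ j a, η ≤ wx j a) (hs₀ : 0 < s₀) (hs : s₀ ≤ s)
    (hs' : s ≤ 1 / 2) (hv : 0 < v) (hK : 0 < K) {A : Finset (Fin n)}
    (hvar : v ≤ forceProb wx g A s - forceProb wx g A s ^ 2)
    (hsum : ∑ j, (forceProb wx g (insert j A) s - forceProb wx g A s) ≤ K) :
    ∃ j, influenceFloor (s₀ * η) v K < forceProb wx g (insert j A) s - forceProb wx g A s := by
  have h0 : 0 ≤ s := hs₀.le.trans hs
  have h1 : s ≤ 1 := by linarith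
  have hmark : ∀ R, s₀ ≤ bernWeight s R :=
    Bool.forall_bool.2 ⟨show s₀ ≤ 1 - s by linarith, hs⟩
  have hatom : ∀ j a, s₀ * η ≤ markedWeight wx s j a := fun j a =>
    mul_le_mul (hmark a.1) (hwη j a.2) hη.le (hs₀.le.trans (hmark a.1))
  obtain ⟨j, hj⟩ := exists_lt_influence
    (fun j => prodWeight_mem_stdSimplex (bernWeight_mem_stdSimplex h0 h1) (hw j))
    (mul_pos hs₀ hη) (mul_le_one₀ (hs.trans h1) hη.le hη1) hatom (forceInd_eq_zero_or_one A)
    hv hK hvar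
    ((Finset.sum_le_sum fun j _ => influence_forceInd_le hw h0 h1 A j).trans hsum)
  exact ⟨j, hj.trans_le (influence_forceInd_le hw h0 h1 A j)⟩

theorem exists_finset_forceProb (hw : ∀ j, wx j ∈ stdSimplex ℝ Bool) {s η K v δ p c : ℝ}
    (hη : 0 < η) (hη1 : η ≤ 1) (hwη : ∀ j a, η ≤ wx j a) (hs₀ : 0 < s₀) (hs : s₀ ≤ s)
    (hs' : s ≤ 1 / 2) (hK : 0 < K) (hv : 0 < v) (hp : v ≤ p * δ) (hδ : 0 ≤ δ)
    (hg : p ≤ prob (piWeight wx) g) {A₀ : Finset (Fin n)}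
    (hA₀ : A₀.card * influenceFloor (s₀ * η) v K + c ≤ forceProb wx g A₀ s) :
    ∃ A : Finset (Fin n), A.card * influenceFloor (s₀ * η) v K + c ≤ forceProb wx g A s ∧
      (1 - δ ≤ forceProb wx g A s ∨
        K < ∑ j, (forceProb wx g (insert j A) s - forceProb wx g A s)) := by
  have h0 : 0 ≤ s := hs₀.le.trans hs
  have h1 : s ≤ 1 := by linarith
  set τ := influenceFloor (s₀ * η) v K
  obtain ⟨A, hA, hmax⟩ := Finset.exists_max_image
    (Finset.univ.filter fun A : Finset (Fin n) => A.card * τ + c ≤ forceProb wx g A s)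
    Finset.card ⟨A₀, by simpa using hA₀⟩
  simp only [Finset.mem_filter, Finset.mem_univ, true_and] at hA hmax
  refine ⟨A, hA, ?_⟩
  by_contra! ⟨hlt, hsum⟩
  have hpA : p ≤ forceProb wx g A s := hg.trans (prob_le_forceProb hw h0 h1 A)
  have hvar : v ≤ forceProb wx g A s - forceProb wx g A s ^ 2 := by
    have := mul_le_mul hpA (by linarith : δ ≤ 1 - forceProb wx g A s) hδ
      (forceProb_nonneg hw h0 h1 A)
    linarith
  obtain ⟨j, hj⟩ := exists_influenceFloor_lt_forceProb_sub hw hη hη1 hwη hs₀ hs hs' hv hK hvar hsum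
  have hjA : j ∉ A := fun hjA => by
    rw [Finset.insert_eq_of_mem hjA, sub_self] at hj
    exact hj.not_ge (influenceFloor_pos _ _ _).le
  have hcard := Finset.card_insert_of_notMem hjA
  have := hmax (insert j A) (by rw [hcard]; push_cast; linarith)
  omega

theorem walk_invariant (hw : ∀ j, wx j ∈ stdSimplex ℝ Bool) (hn : 1 ≤ n) {η K v δ p : ℝ}
    (hη : 0 < η) (hη1 : η ≤ 1) (hwη : ∀ j a, η ≤ wx j a) (hs₀ : 0 < s₀) {M : ℕ}
    (hsM : s₀ + M / (2 * n) ≤ 1 / 2) (hK : 0 < K) (hv : 0 < v) (hp : v ≤ p * δ) (hδ : 0 ≤ δ)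
    (hg : p ≤ prob (piWeight wx) g) (i : ℕ) (hi : i ≤ M) :
    ∃ A : Finset (Fin n),
      A.card * influenceFloor (s₀ * η) v K ≤ 1 ∧ 1 - δ ≤ forceProb wx g A (level s₀ n i) ∨
      A.card * influenceFloor (s₀ * η) v K + i * (K / (4 * n))
        ≤ forceProb wx g A (level s₀ n i) := by
  have : (1 : ℝ) ≤ n := mod_cast hn
  have hs₁ : s₀ ≤ 1 := by linarith [show (0 : ℝ) ≤ M / (2 * n) by positivity]
  have hlevel0 : ∀ i, 0 ≤ level s₀ n i := fun i => hs₀.le.trans (le_level hs₁ n i)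
  have hlevel1 : ∀ i, level s₀ n i ≤ 1 := fun i => level_le_one hs₁ n i
  set τ := influenceFloor (s₀ * η) v K
  induction i with
  | zero => exact ⟨∅, Or.inr (by simpa using forceProb_nonneg hw (hlevel0 0) (hlevel1 0) ∅)⟩
  | succ i ih =>
    have hgain := fun A => forceProb_add_le (g := g) (s := level s₀ n i) hw (hlevel0 i) (hlevel1 i)
      (by positivity) (one_div_two_mul_le_one n)
      (by rw [Fintype.card_fin, one_div_mul_cancel (by positivity)]) A
    rw [← level_succ] at hgain
    have hmono : ∀ A, forceProb wx g A (level s₀ n i) ≤ forceProb wx g A (level s₀ n (i + 1)) :=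
      fun A => le_trans (le_add_of_nonneg_right (mul_nonneg (by positivity)
        (Finset.sum_nonneg fun j _ => sub_nonneg.2
          (forceProb_mono hw (hlevel0 i) (hlevel1 i) (Finset.subset_insert _ _))))) (hgain A)
    obtain ⟨A₀, ⟨hcard, hA₀⟩ | hA₀⟩ := ih (by omega)
    · exact ⟨A₀, Or.inl ⟨hcard, hA₀.trans (hmono A₀)⟩⟩
    have hhalf : level s₀ n i ≤ 1 / 2 := by
      refine (level_le hs₀.le hs₁ n i).trans (le_trans ?_ hsM)
      have : (i : ℝ) ≤ M := mod_cast (by omega : i ≤ M)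
      gcongr
    obtain ⟨A, hA, hdone | hsum⟩ := exists_finset_forceProb hw hη hη1 hwη hs₀ (le_level hs₁ n i)
      hhalf hK hv hp hδ hg hA₀
    · have : 0 ≤ i * (K / (4 * n)) := by positivity
      exact ⟨A, Or.inl ⟨by linarith [forceProb_le_one (g := g) hw (hlevel0 i) (hlevel1 i) A],
        hdone.trans (hmono A)⟩⟩
    · refine ⟨A, Or.inr ?_⟩
      have hstep : 1 / (2 * (n : ℝ)) / 2 * K = K / (4 * n) := by field_simp; norm_num
      have hlin := mul_le_mul_of_nonneg_left hsum.le
        (by positivity : 0 ≤ 1 / (2 * (n : ℝ)) / 2)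
      push_cast
      linarith [hgain A]

theorem exists_finset_le_forceProb (hw : ∀ j, wx j ∈ stdSimplex ℝ Bool) (hn : 1 ≤ n)
    {η K v δ p : ℝ} (hη : 0 < η) (hη1 : η ≤ 1) (hwη : ∀ j a, η ≤ wx j a) (hs₀ : 0 < s₀) {M : ℕ}
    (hsM : s₀ + M / (2 * n) ≤ 1 / 2) (hK : 0 < K) (hMK : 4 * n < M * K) (hv : 0 < v)
    (hp : v ≤ p * δ) (hδ : 0 ≤ δ) (hg : p ≤ prob (piWeight wx) g) :
    ∃ A : Finset (Fin n), A.card * influenceFloor (s₀ * η) v K ≤ 1 ∧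
      1 - δ ≤ forceProb wx g A (level s₀ n M) := by
  have : (1 : ℝ) ≤ n := mod_cast hn
  have hs₁ : s₀ ≤ 1 := by linarith [show (0 : ℝ) ≤ M / (2 * n) by positivity]
  obtain ⟨A, hA | hA⟩ :=
    walk_invariant hw hn hη hη1 hwη hs₀ hsM hK hv hp hδ hg M le_rfl
  · exact ⟨A, hA⟩
  · have hle := forceProb_le_one (g := g) hw (hs₀.le.trans (le_level hs₁ n M))
      (level_le_one hs₁ n M) A
    have hgt : 1 < M * (K / (4 * n)) := by
      rw [← mul_div_assoc, lt_div_iff₀ (by positivity)]; linarith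
    have : 0 ≤ A.card * influenceFloor (s₀ * η) v K :=
      mul_nonneg (Nat.cast_nonneg _) (influenceFloor_pos _ _ _).le
    linarith

end Walk

/-! ### One round with non-rare bits -/

section FiniteWeights

variable {Λ Λ' : Type*} [Fintype Λ] [Fintype Λ'] {w : Λ → ℝ} {w' : Λ' → ℝ}

theorem prob_prodWeight_and (P : Λ → Prop) (Q : Λ' → Prop) :
    prob (prodWeight w w') (fun q => P q.1 ∧ Q q.2) = prob w P * prob w' Q := by
  simp only [prob, mean_prodWeight, ind_and, mean_const_mul]
  rw [mul_comm, ← mean_const_mul]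
  simp only [mul_comm]

theorem prob_prodWeight (P : Λ × Λ' → Prop) :
    prob (prodWeight w w') P = mean w fun a => prob w' fun b => P (a, b) :=
  mean_prodWeight _

theorem mul_le_prob_prodWeight (hw : w ∈ stdSimplex ℝ Λ) (hw' : w' ∈ stdSimplex ℝ Λ') {P : Λ → Prop}
    {Q : Λ × Λ' → Prop} {p q : ℝ} (hq : 0 ≤ q) (hP : p ≤ prob w P)
    (hQ : ∀ a, P a → q ≤ prob w' fun b => Q (a, b)) : p * q ≤ prob (prodWeight w w') Q := by
  rw [prob_prodWeight]
  refine (mul_le_mul_of_nonneg_right hP hq).trans ?_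
  rw [mul_comm, prob, ← mean_const_mul]
  refine mean_mono hw fun a => ?_
  by_cases h : P a
  · rw [ind_of_true h, mul_one]; exact hQ a h
  · rw [ind_of_false h, mul_zero]; exact prob_nonneg hw' _

theorem weight_le_prob (hw : w ∈ stdSimplex ℝ Λ) {P : Λ → Prop} {a : Λ} (h : P a) :
    w a ≤ prob w P := by
  have := Finset.single_le_sum (f := fun a => w a * ind (P a))
    (fun b _ => mul_nonneg (hw.1 b) (ind_nonneg _)) (Finset.mem_univ a)
  rwa [ind_of_true h, mul_one] at this

theorem mean_piWeight_eval {ι Ω : Type*} [Fintype ι] [DecidableEq ι] [Fintype Ω] {w : ι → Ω → ℝ}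
    (hw : ∀ j, w j ∈ stdSimplex ℝ Ω) (j : ι) (u : Ω → ℝ) :
    mean (piWeight w) (fun x => u (x j)) = mean (w j) u := by
  rw [← mean_piWeight_resample hw j]
  simp only [Function.update_self]
  exact mean_const (piWeight_mem_stdSimplex hw) _

theorem mean_card_trueSet_le {ι : Type*} [Fintype ι] [DecidableEq ι] {w : ι → Bool → ℝ}
    (hw : ∀ j, w j ∈ stdSimplex ℝ Bool) {s : ℝ} (hs : ∀ j, w j true ≤ s) :
    mean (piWeight w) (fun R => ((trueSet R).card : ℝ)) ≤ s * Fintype.card ι := by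
  have hcard : ∀ R : ι → Bool, ((trueSet R).card : ℝ) = ∑ j, if R j = true then (1 : ℝ) else 0 :=
    fun R => by simp [trueSet]
  simp only [hcard]
  rw [mean_sum]
  refine (Finset.sum_le_card_nsmul _ _ s fun j _ => ?_).trans_eq ?_
  · rw [mean_piWeight_eval hw j fun b => if b = true then (1 : ℝ) else 0]
    simpa [mean] using hs j
  · rw [nsmul_eq_mul, Finset.card_univ, mul_comm]

end FiniteWeights

theorem le_sum_bool_of_exists_le {F : Bool → ℝ} {ρ : ℝ} (hF : ∀ b, 0 ≤ F b) (h : ∃ b, ρ ≤ F b) :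
    ρ ≤ ∑ b, F b :=
  let ⟨b, hb⟩ := h
  hb.trans (Finset.single_le_sum (fun b _ => hF b) (Finset.mem_univ b))

theorem exists_half_le_of_le_sum_bool {F : Bool → ℝ} {ρ : ℝ} (h : ρ ≤ ∑ b, F b) :
    ∃ b, ρ / 2 ≤ F b := by
  by_contra! hlt
  linarith [hlt true, hlt false, Fintype.sum_bool F]

theorem exists_quarter_le_prob_le {Λ Λ' : Type*} [Fintype Λ] [Fintype Λ'] {w : Λ → ℝ} {w' : Λ' → ℝ}
    (hw : w ∈ stdSimplex ℝ Λ) (hw' : w' ∈ stdSimplex ℝ Λ') {ρ : ℝ} (hρ : 0 ≤ ρ)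
    {P : Λ → Bool → Λ' → Prop} (hP : ∀ x, ∃ b, ρ ≤ prob w fun l => P l b x) :
    ∃ b, ρ / 4 ≤ prob w fun l => ρ / 4 ≤ prob w' (P l b) := by
  have hsum : ρ ≤ ∑ b, mean w fun l => prob w' (P l b) := by
    simp only [prob, mean_comm (w := w)]
    rw [← mean_sum, ← mean_const hw' ρ]
    exact mean_mono hw' fun x => le_sum_bool_of_exists_le (fun b => prob_nonneg hw _) (hP x)
  refine (exists_half_le_of_le_sum_bool hsum).imp fun b hb => ?_
  have := mean_sub_le_prob_le hw (fun l => prob_le_one hw' (P l b)) (by positivity : 0 ≤ ρ / 4)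
  linarith

open Classical in
/-- `S` if it has at most `c` elements, and `∅` otherwise. -/
noncomputable def truncate {ι : Type*} (c : ℝ) (S : Finset ι) : Finset ι :=
  if S.card ≤ c then S else ∅

theorem card_truncate_le {ι : Type*} {c : ℝ} (hc : 0 ≤ c) (S : Finset ι) :
    ((truncate c S).card : ℝ) ≤ c := by
  unfold truncate
  split_ifs with h
  · exact h
  · simpa using hc

theorem truncate_of_card_le {ι : Type*} {c : ℝ} {S : Finset ι} (h : (S.card : ℝ) ≤ c) :
    truncate c S = S :=
  if_pos h

/-- The probability under `W` of an input in which the coalition `S` can bring about `g`. -/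
noncomputable def reachProb {ι Ω : Type*} [Fintype (ι → Ω)] (W : (ι → Ω) → ℝ) (g : (ι → Ω) → Prop)
    (S : Finset ι) : ℝ :=
  prob W fun x => Reaches S x g

theorem reachProb_mono {ι Ω : Type*} [Fintype (ι → Ω)] {W : (ι → Ω) → ℝ} (hW : W ∈ stdSimplex ℝ _)
    (g : (ι → Ω) → Prop) : Monotone (reachProb W g) :=
  fun _ _ h => prob_mono hW fun _ hx => hx.mono h fun _ hy => hy

/-- A random coalition, of size at most `size`, for one round in which player `j` has bit weights
`w j`. It is drawn independently of the future randomness `l ∼ ν'`, and `Good l b` is the set of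
round strings from which the future coalition wins for `b`. If every round string is good for some
`b` with probability at least `ρ`, then for one fixed `b`, with probability at least `ρ'` over both
samples, the coalition brings about `Good l b` except with probability `e`. -/
def RoundScheme (n : ℕ) (w : Fin n → Bool → ℝ) (size e ρ ρ' : ℝ) : Prop :=
  ∃ (Λ : Type) (_ : Fintype Λ) (ν : Λ → ℝ) (B : Λ → Finset (Fin n)), ν ∈ stdSimplex ℝ Λ ∧
    (∀ l, ((B l).card : ℝ) ≤ size) ∧
    ∀ (Λ' : Type) (_ : Fintype Λ') (ν' : Λ' → ℝ), ν' ∈ stdSimplex ℝ Λ' →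
      ∀ Good : Λ' → Bool → (Fin n → Bool) → Prop,
      (∀ x, ∃ b, ρ ≤ prob ν' fun l => Good l b x) →
      ∃ b, ρ' ≤ prob (prodWeight ν' ν) fun q => 1 - e ≤ reachProb (piWeight w) (Good q.1 b) (B q.2)

section Blocks

variable {n a N : ℕ}

theorem card_filter_val_mod_eq_le (n N c : ℕ) :
    (Finset.univ.filter fun j : Fin n => j.val % N = c).card ≤ n / N + 1 := by
  rw [← Finset.card_range (n / N + 1)]
  refine Finset.card_le_card_of_injOn (fun j => j.val / N) (fun j _ => ?_) fun j hj j' hj' h => ?_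
  · simpa using Nat.lt_succ_of_le (Nat.div_le_div_right j.isLt.le)
  · simp only [Finset.mem_coe, Finset.mem_filter, Finset.mem_univ, true_and] at hj hj' h
    rw [Fin.ext_iff, ← Nat.div_add_mod j.val N, ← Nat.div_add_mod j'.val N, h, hj, hj']

/-- The union of the residue classes modulo `N` listed in `l`. -/
def blockUnion (n : ℕ) (l : Fin a → Fin N) : Finset (Fin n) := {j | ∃ i, j.val % N = (l i).val}

theorem card_blockUnion_le (l : Fin a → Fin N) : (blockUnion n l).card ≤ a * (n / N + 1) := by
  have hsub : blockUnion n l ⊆ Finset.univ.biUnion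
      fun i : Fin a => Finset.univ.filter fun j : Fin n => j.val % N = (l i).val := by
    intro j hj; simpa [blockUnion] using hj
  refine (Finset.card_le_card hsub).trans (Finset.card_biUnion_le.trans ?_)
  refine (Finset.sum_le_sum fun i _ => card_filter_val_mod_eq_le n N (l i).val).trans ?_
  simp

theorem exists_subset_blockUnion (hN : 0 < N) (A : Finset (Fin n)) (hA : A.card ≤ a) :
    ∃ l : Fin a → Fin N, A ⊆ blockUnion n l := by
  refine ⟨fun i => if h : i.val < A.card then
    ⟨(A.equivFin.symm ⟨i, h⟩).val.val % N, Nat.mod_lt _ hN⟩ else ⟨0, hN⟩, fun j hj => ?_⟩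
  simp only [blockUnion, Finset.mem_filter, Finset.mem_univ, true_and]
  refine ⟨⟨(A.equivFin ⟨j, hj⟩).val, (A.equivFin ⟨j, hj⟩).isLt.trans_le hA⟩, ?_⟩
  simp

/-- The uniform weight function on `Fin N`. -/
noncomputable def unifWeight (N : ℕ) (_ : Fin N) : ℝ := 1 / N

theorem unifWeight_mem_stdSimplex (hN : 0 < N) : unifWeight N ∈ stdSimplex ℝ (Fin N) := by
  refine ⟨fun _ => by unfold unifWeight; positivity, ?_⟩
  simp [unifWeight, hN.ne']

theorem pow_le_prob_subset_blockUnion (hN : 0 < N) (A : Finset (Fin n)) (hA : A.card ≤ a) :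
    (1 / (N : ℝ)) ^ a
      ≤ prob (piWeight fun _ : Fin a => unifWeight N) fun l => A ⊆ blockUnion n l := by
  obtain ⟨l, hl⟩ := exists_subset_blockUnion hN A hA
  refine le_of_eq_of_le ?_ (weight_le_prob
    (piWeight_mem_stdSimplex fun _ => unifWeight_mem_stdSimplex hN) hl)
  simp [piWeight, unifWeight]

end Blocks

theorem quarter_le_prob_reachProb {ι : Type*} [Fintype ι] [DecidableEq ι] [Nonempty ι]
    {w : ι → Bool → ℝ} (hw : ∀ j, w j ∈ stdSimplex ℝ Bool) {s e : ℝ} (hs0 : 0 < s) (hs1 : s ≤ 1)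
    (he : 0 < e) {g : (ι → Bool) → Prop} {A : Finset ι} (hA : 1 - e / 2 ≤ forceProb w g A s) :
    1 / 4 ≤ prob (piWeight fun _ => bernWeight s) fun R =>
      1 - e ≤ reachProb (piWeight w) g (A ∪ trueSet R)
        ∧ ((trueSet R).card : ℝ) ≤ 4 * s * Fintype.card ι := by
  have hι : (0 : ℝ) < Fintype.card ι := mod_cast Fintype.card_pos
  have hb := piWeight_bernWeight_mem_stdSimplex (ι := ι) hs0.le hs1
  have hfail : prob (piWeight fun _ => bernWeight s) (fun R =>
      e < 1 - reachProb (piWeight w) g (A ∪ trueSet R)) ≤ 1 / 2 := by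
    refine (prob_lt_le_mean_div hb
      (fun R => sub_nonneg.2 (prob_le_one (piWeight_mem_stdSimplex hw) _)) he).trans ?_
    rw [mean_sub, mean_const hb, div_le_iff₀ he]
    rw [forceProb_eq_mean_prob] at hA
    linarith
  have hlarge : prob (piWeight fun _ : ι => bernWeight s) (fun R =>
      4 * s * Fintype.card ι < (trueSet R).card) ≤ 1 / 4 := by
    refine (prob_lt_le_mean_div hb (fun R => Nat.cast_nonneg _) (by positivity)).trans ?_
    rw [div_le_iff₀ (by positivity)]
    refine (mean_card_trueSet_le (s := s) (fun _ => bernWeight_mem_stdSimplex hs0.le hs1)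
      fun _ => by simp [bernWeight]).trans (by linarith)
  have hand := prob_sub_prob_not_le_prob_and hb
    (fun R => ¬e < 1 - reachProb (piWeight w) g (A ∪ trueSet R))
    fun R => ((trueSet R).card : ℝ) ≤ 4 * s * Fintype.card ι
  rw [prob_not hb] at hand
  simp only [not_le, not_lt, sub_le_comm] at hand hfail hlarge ⊢
  linarith

section NonRare

variable {n : ℕ} {w : Fin n → Bool → ℝ}

theorem card_truncate_union_blockUnion_le {a N : ℕ} {c : ℝ} (hc : 0 ≤ c) (S : Finset (Fin n))
    (l : Fin a → Fin N) :
    ((truncate c S ∪ blockUnion n l).card : ℝ) ≤ c + a * (n / N + 1) := by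
  have hblock : ((blockUnion n l).card : ℝ) ≤ a * (n / N + 1) := by
    refine le_trans (mod_cast card_blockUnion_le l : _ ≤ ((a * (n / N + 1) : ℕ) : ℝ)) ?_
    push_cast
    gcongr
    exact Nat.cast_div_le
  refine le_trans ?_ (add_le_add (card_truncate_le hc S) hblock)
  exact_mod_cast Finset.card_union_le _ _

theorem le_prob_reachProb_truncate_union_blockUnion (hw : ∀ j, w j ∈ stdSimplex ℝ Bool)
    {g : (Fin n → Bool) → Prop} {A : Finset (Fin n)} {a N : ℕ} {s e : ℝ} (hn : 1 ≤ n) (hs0 : 0 < s)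
    (hs1 : s ≤ 1) (he : 0 < e) (hN : 0 < N) (hAa : A.card ≤ a)
    (hA : 1 - e / 2 ≤ forceProb w g A s) :
    1 / 4 * (1 / (N : ℝ)) ^ a ≤ prob
      (prodWeight (piWeight fun _ : Fin n => bernWeight s) (piWeight fun _ : Fin a => unifWeight N))
      fun q => 1 - e ≤
        reachProb (piWeight w) g (truncate (4 * s * n) (trueSet q.1) ∪ blockUnion n q.2) := by
  have : Nonempty (Fin n) := ⟨⟨0, hn⟩⟩
  have hb := piWeight_bernWeight_mem_stdSimplex (ι := Fin n) hs0.le hs1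
  have hu : (piWeight fun _ : Fin a => unifWeight N) ∈ stdSimplex ℝ (Fin a → Fin N) :=
    piWeight_mem_stdSimplex fun _ => unifWeight_mem_stdSimplex hN
  refine (mul_le_mul (quarter_le_prob_reachProb hw hs0 hs1 he hA)
    (pow_le_prob_subset_blockUnion hN A hAa) (by positivity) (prob_nonneg hb _)).trans ?_
  rw [← prob_prodWeight_and]
  refine prob_mono (prodWeight_mem_stdSimplex hb hu) ?_
  rintro ⟨R, l⟩ ⟨⟨hreach, hcard⟩, hsub⟩
  rw [Fintype.card_fin] at hcard
  refine hreach.trans (reachProb_mono (piWeight_mem_stdSimplex hw) g ?_)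
  rw [truncate_of_card_le hcard, Finset.union_comm]
  exact Finset.union_subset_union_right hsub

theorem roundScheme_of_le_weight (hw : ∀ j, w j ∈ stdSimplex ℝ Bool) (hn : 1 ≤ n) {η s₀ K ρ e : ℝ}
    (hη : 0 < η) (hη1 : η ≤ 1) (hwη : ∀ j a, η ≤ w j a) (hs₀ : 0 < s₀) {M : ℕ}
    (hsM : s₀ + M / (2 * n) ≤ 1 / 2) (hK : 0 < K) (hMK : 4 * n < M * K) (hρ : 0 < ρ) (he : 0 < e)
    {a N : ℕ} (ha : 1 / influenceFloor (s₀ * η) (ρ / 4 * (e / 2)) K ≤ a) (hN : 0 < N) :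
    RoundScheme n w (4 * (s₀ + M / (2 * n)) * n + a * (n / N + 1)) e ρ (ρ / 16 * (1 / N) ^ a) := by
  have hs₁ : s₀ ≤ 1 := by linarith [show (0 : ℝ) ≤ M / (2 * n) by positivity]
  set s := level s₀ n M
  have hs1 : s ≤ 1 := level_le_one hs₁ n M
  have hspos : 0 < s := hs₀.trans_le (le_level hs₁ n M)
  have hν := prodWeight_mem_stdSimplex
    (piWeight_bernWeight_mem_stdSimplex (ι := Fin n) hspos.le hs1)
    (piWeight_mem_stdSimplex fun _ : Fin a => unifWeight_mem_stdSimplex hN)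
  refine ⟨(Fin n → Bool) × (Fin a → Fin N), inferInstance, _,
    fun q => truncate (4 * s * n) (trueSet q.1) ∪ blockUnion n q.2, hν,
    fun q => ?_, fun Λ' _ ν' hν' Good hGood => ?_⟩
  · refine (card_truncate_union_blockUnion_le (by positivity) _ _).trans ?_
    have := level_le hs₀.le hs₁ n M
    gcongr
  obtain ⟨b, hdense⟩ := exists_quarter_le_prob_le hν' (piWeight_mem_stdSimplex hw) hρ.le hGood
  refine ⟨b, ?_⟩
  rw [show ρ / 16 * (1 / (N : ℝ)) ^ a = ρ / 4 * (1 / 4 * (1 / N) ^ a) by ring]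
  refine mul_le_prob_prodWeight hν' hν (by positivity) hdense fun l hl => ?_
  obtain ⟨A, hAcard, hA⟩ := exists_finset_le_forceProb hw hn hη hη1 hwη hs₀ hsM hK hMK
    (v := ρ / 4 * (e / 2)) (by positivity) le_rfl (by positivity) hl
  have hAa : A.card ≤ a := by
    exact_mod_cast ((le_div_iff₀ (influenceFloor_pos _ _ _)).2 hAcard).trans ha
  exact le_prob_reachProb_truncate_union_blockUnion (g := Good l b) hw hn hspos hs1 he hN hAa hA

end NonRare

/-! ### One round with rare bits -/

section FiniteWeights

variable {Ω : Type*} [Fintype Ω]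

theorem mean_piWeight_append (w : Ω → ℝ) (s t : ℕ) (F : (Fin (s + t) → Ω) → ℝ) :
    mean (piWeight fun _ => w) F = mean (piWeight fun _ : Fin s => w) fun ys =>
      mean (piWeight fun _ : Fin t => w) fun zs => F (Fin.append ys zs) := by
  rw [← mean_prodWeight (F := fun p => F (Fin.append p.1 p.2)), mean, mean,
    ← (Fin.appendEquiv s t).sum_comp]
  refine Finset.sum_congr rfl fun p _ => ?_
  simp [piWeight, prodWeight, Fin.prod_univ_add, Fin.appendEquiv]

theorem prob_piWeight_forall {ι : Type*} [Fintype ι] [DecidableEq ι] (w : ι → Ω → ℝ)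
    (P : ι → Ω → Prop) :
    prob (piWeight w) (fun x => ∀ j, P j (x j)) = ∏ j, prob (w j) (P j) := by
  classical
  simp only [prob, mean]
  rw [Fintype.prod_sum]
  refine Finset.sum_congr rfl fun x _ => ?_
  simp [piWeight, ind, Finset.prod_ite_zero]

end FiniteWeights

theorem exists_sub_le_div_of_bounded {u : ℕ → ℝ} {c : ℝ} (h0 : 0 ≤ u 0) {N : ℕ} (hN : 0 < N)
    (hc : u N ≤ c) : ∃ k < N, u (k + 1) - u k ≤ c / N := by
  have hsum : ∑ k ∈ Finset.range N, (u (k + 1) - u k) ≤ ∑ _k ∈ Finset.range N, c / N := by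
    rw [Finset.sum_range_sub, Finset.sum_const, Finset.card_range, nsmul_eq_mul,
      mul_div_cancel₀ _ (Nat.cast_ne_zero.2 hN.ne')]
    linarith
  obtain ⟨k, hk, h⟩ := Finset.exists_le_of_sum_le ⟨0, by simpa using hN⟩ hsum
  exact ⟨k, Finset.mem_range.1 hk, h⟩

section Spread

variable {ι : Type*}

/-- The coordinatewise disjunction of a family of bit strings. -/
def orAll {κ : Type*} [Fintype κ] (ys : κ → ι → Bool) (j : ι) : Bool := decide (∃ k, ys k j = true)

theorem orAll_eq_true {κ : Type*} [Fintype κ] {ys : κ → ι → Bool} {j : ι} :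
    orAll ys j = true ↔ ∃ k, ys k j = true :=
  decide_eq_true_iff

variable [Fintype ι]

theorem mem_trueSet_orAll {κ : Type*} [Fintype κ] {ys : κ → ι → Bool} {j : ι} :
    j ∈ trueSet (orAll ys) ↔ ∃ k, ys k j = true := by
  simp [trueSet, orAll_eq_true]

variable [DecidableEq ι]

theorem trueSet_orAll {κ : Type*} [Fintype κ] (ys : κ → ι → Bool) :
    trueSet (orAll ys) = Finset.univ.biUnion fun k => trueSet (ys k) := by
  ext j
  rw [mem_trueSet_orAll]
  simp [trueSet]

theorem trueSet_orAll_append {s t : ℕ} (ys : Fin s → ι → Bool) (zs : Fin t → ι → Bool) :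
    trueSet (orAll (Fin.append ys zs)) = trueSet (orAll ys) ∪ trueSet (orAll zs) := by
  ext j
  simp only [Finset.mem_union, mem_trueSet_orAll]
  constructor
  · rintro ⟨k, hk⟩
    induction k using Fin.addCases with
    | left k => exact Or.inl ⟨k, by simpa using hk⟩
    | right k => exact Or.inr ⟨k, by simpa using hk⟩
  · rintro (⟨k, hk⟩ | ⟨k, hk⟩)
    · exact ⟨Fin.castAdd t k, by simpa using hk⟩
    · exact ⟨Fin.natAdd s k, by simpa using hk⟩

theorem mean_card_trueSet_orAll_le {w : ι → Bool → ℝ} (hw : ∀ j, w j ∈ stdSimplex ℝ Bool) {η : ℝ}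
    (hη : ∀ j, w j true ≤ η) (t : ℕ) :
    mean (piWeight fun _ : Fin t => piWeight w) (fun ys => ((trueSet (orAll ys)).card : ℝ))
      ≤ t * (η * Fintype.card ι) := by
  have hW := piWeight_mem_stdSimplex hw
  have hcard : ∀ ys : Fin t → ι → Bool,
      ((trueSet (orAll ys)).card : ℝ) ≤ ∑ k, ((trueSet (ys k)).card : ℝ) := fun ys => by
    rw [trueSet_orAll]; exact_mod_cast Finset.card_biUnion_le
  refine (mean_mono (piWeight_mem_stdSimplex fun _ => hW) hcard).trans ?_
  rw [mean_sum]
  refine (Finset.sum_le_card_nsmul _ _ (η * Fintype.card ι) fun k _ => ?_).trans_eq (by simp)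
  rw [mean_piWeight_eval (fun _ => hW) k fun y => ((trueSet y).card : ℝ)]
  exact mean_card_trueSet_le hw hη

/-- The mean of `G` at `S` joined with the ones of `t` independent samples from `W`. -/
noncomputable def spread (W : (ι → Bool) → ℝ) (t : ℕ) (G : Finset ι → ℝ) (S : Finset ι) : ℝ :=
  mean (piWeight fun _ : Fin t => W) fun ys => G (S ∪ trueSet (orAll ys))

variable {W : (ι → Bool) → ℝ} {G G' : Finset ι → ℝ}

theorem spread_add (W : (ι → Bool) → ℝ) (s t : ℕ) (G : Finset ι → ℝ) (S : Finset ι) :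
    spread W (s + t) G S = spread W s (spread W t G) S := by
  simp only [spread, mean_piWeight_append, trueSet_orAll_append, Finset.union_assoc]

theorem spread_mono (hW : W ∈ stdSimplex ℝ (ι → Bool)) (t : ℕ) (h : ∀ S, G S ≤ G' S)
    (S : Finset ι) : spread W t G S ≤ spread W t G' S :=
  mean_mono (piWeight_mem_stdSimplex fun _ => hW) fun _ => h _

theorem spread_const (hW : W ∈ stdSimplex ℝ (ι → Bool)) (t : ℕ) (c : ℝ) (S : Finset ι) :
    spread W t (fun _ => c) S = c :=
  mean_const (piWeight_mem_stdSimplex fun _ => hW) c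

theorem le_spread (hW : W ∈ stdSimplex ℝ (ι → Bool)) (hG : Monotone G) (t : ℕ) (S : Finset ι) :
    G S ≤ spread W t G S := by
  rw [← spread_const hW t (G S) S]
  exact mean_mono (piWeight_mem_stdSimplex fun _ => hW) fun _ => hG Finset.subset_union_left

theorem spread_le_spread (hW : W ∈ stdSimplex ℝ (ι → Bool)) (hG : Monotone G) {s t : ℕ} (h : s ≤ t)
    (S : Finset ι) : spread W s G S ≤ spread W t G S := by
  obtain ⟨k, rfl⟩ := Nat.exists_eq_add_of_le h
  rw [spread_add]
  exact spread_mono hW s (le_spread hW hG k) S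

theorem spread_sum_mean {Λ : Type*} [Fintype Λ] (ν : Λ → ℝ) (t : ℕ) (F : Bool → Λ → Finset ι → ℝ)
    (S : Finset ι) :
    spread W t (fun S => ∑ b, mean ν fun l => F b l S) S
      = ∑ b, mean ν fun l => spread W t (F b l) S := by
  simp only [spread, mean_sum]
  exact Finset.sum_congr rfl fun b _ => mean_comm _

variable {m : ℕ} {g : (ι → Bool) → Prop}

/- If the disjunction of the samples lies in `g` but `ys i` cannot reach `g` through `S`, then
`ys i` reaches `g` through the ones of the other samples. -/
theorem ind_orAll_le (ys : Fin m → ι → Bool) (S : Finset ι) :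
    ind (g (orAll ys)) ≤ ind (∀ i, Reaches S (ys i) g) + ∑ i,
      (ind (Reaches (S ∪ trueSet (orAll (Function.update ys i fun _ => false))) (ys i) g)
        - ind (Reaches S (ys i) g)) := by
  set O : Fin m → Finset ι := fun i => trueSet (orAll (Function.update ys i fun _ => false))
  have hgain : ∀ i, 0 ≤ ind (Reaches (S ∪ O i) (ys i) g) - ind (Reaches S (ys i) g) := fun i =>
    sub_nonneg.2 (ind_mono fun h => h.mono Finset.subset_union_left fun _ hy => hy)
  have hsum := Finset.sum_nonneg fun i (_ : i ∈ Finset.univ) => hgain i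
  by_cases hall : ∀ i, Reaches S (ys i) g
  · rw [ind_of_true hall]
    linarith [ind_le_one (g (orAll ys))]
  by_cases hg : g (orAll ys)
  · push Not at hall
    obtain ⟨i, hi⟩ := hall
    have hreach : Reaches (S ∪ O i) (ys i) g := by
      refine ⟨orAll ys, fun j hj => ?_, hg⟩
      have hother : ∀ k ≠ i, ys k j ≠ true := fun k hk hkj => hj <| Finset.mem_union_right _ <|
        mem_trueSet_orAll.2 ⟨k, by rwa [Function.update_of_ne hk]⟩
      rw [Bool.eq_iff_iff, orAll_eq_true]
      exact ⟨fun ⟨k, hk⟩ => by_contra fun hne => hother k (by rintro rfl; exact hne hk) hk,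
        fun h => ⟨i, h⟩⟩
    have hsingle := Finset.single_le_sum (fun i _ => hgain i) (Finset.mem_univ i)
    rw [ind_of_true hreach, ind_of_false hi] at hsingle
    linarith [ind_le_one (g (orAll ys)), ind_nonneg (∀ i, Reaches S (ys i) g)]
  · rw [ind_of_false hg]
    linarith [ind_nonneg (∀ i, Reaches S (ys i) g)]

theorem mean_ind_reaches_others_le (hW : W ∈ stdSimplex ℝ (ι → Bool)) (i : Fin m) (S : Finset ι) :
    mean (piWeight fun _ : Fin m => W) (fun ys =>
        ind (Reaches (S ∪ trueSet (orAll (Function.update ys i fun _ => false))) (ys i) g))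
      ≤ spread W m (reachProb W g) S := by
  rw [← mean_piWeight_resample (fun _ => hW) i]
  simp only [Function.update_idem, Function.update_self]
  refine mean_mono (piWeight_mem_stdSimplex fun _ => hW) fun ys => ?_
  refine reachProb_mono hW g (Finset.union_subset_union_right fun j hj => ?_)
  obtain ⟨k, hk⟩ := mem_trueSet_orAll.1 hj
  obtain rfl | hki := eq_or_ne k i
  · simp at hk
  · exact mem_trueSet_orAll.2 ⟨k, by rwa [Function.update_of_ne hki] at hk⟩

theorem prob_orAll_le (hW : W ∈ stdSimplex ℝ (ι → Bool)) (m : ℕ) (g : (ι → Bool) → Prop)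
    (S : Finset ι) :
    prob (piWeight fun _ : Fin m => W) (fun ys => g (orAll ys))
      ≤ reachProb W g S ^ m + m * (spread W m (reachProb W g) S - reachProb W g S) := by
  refine (mean_mono (piWeight_mem_stdSimplex fun _ => hW) fun ys => ind_orAll_le ys S).trans ?_
  rw [mean_add, mean_sum]
  refine add_le_add (le_of_eq ?_) ?_
  · simpa [prob, reachProb] using prob_piWeight_forall (fun _ : Fin m => W) fun _ y => Reaches S y g
  refine (Finset.sum_le_card_nsmul _ _ (spread W m (reachProb W g) S - reachProb W g S)
    fun i _ => ?_).trans_eq (by simp)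
  rw [mean_sub]
  refine sub_le_sub (mean_ind_reaches_others_le hW i S) (le_of_eq ?_)
  exact (mean_piWeight_eval (fun _ => hW) i fun y => ind (Reaches S y g)).symm

theorem reachProb_pow_le (hW : W ∈ stdSimplex ℝ (ι → Bool)) {e c : ℝ} (he : e ≤ 1)
    (hc : (1 - e) ^ m ≤ c) (S : Finset ι) :
    reachProb W g S ^ m ≤ ind (1 - e ≤ reachProb W g S) + c := by
  have h0 : 0 ≤ reachProb W g S := prob_nonneg hW _
  by_cases h : 1 - e ≤ reachProb W g S
  · rw [ind_of_true h]
    have h1 : reachProb W g S ^ m ≤ 1 := pow_le_one₀ h0 (prob_le_one hW _)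
    linarith [pow_nonneg (sub_nonneg.2 he) m]
  · rw [ind_of_false h, zero_add]
    exact (pow_le_pow_left₀ h0 (not_le.1 h).le m).trans hc

end Spread

section Rare

variable {ι Λ : Type*} [Fintype ι] [DecidableEq ι] [Fintype Λ] {ν : Λ → ℝ} {W : (ι → Bool) → ℝ}
  {Good : Λ → Bool → (ι → Bool) → Prop} {ρ e : ℝ}

/-- The expected number of bits `b` for which `S` can bring about `Good l b`, over the goals `l ∼ ν`
and the round string. It is the potential whose growth under `spread` is bounded. -/
noncomputable def expectedReach (W : (ι → Bool) → ℝ) (ν : Λ → ℝ)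
    (Good : Λ → Bool → (ι → Bool) → Prop) (S : Finset ι) : ℝ :=
  ∑ b, mean ν fun l => reachProb W (Good l b) S

theorem spread_expectedReach (t : ℕ) (S : Finset ι) :
    spread W t (expectedReach W ν Good) S
      = ∑ b, mean ν fun l => spread W t (reachProb W (Good l b)) S :=
  spread_sum_mean ν t (fun b l => reachProb W (Good l b)) S

theorem expectedReach_nonneg (hν : ν ∈ stdSimplex ℝ Λ) (hW : W ∈ stdSimplex ℝ (ι → Bool))
    (S : Finset ι) : 0 ≤ expectedReach W ν Good S :=
  Finset.sum_nonneg fun _ _ => mean_nonneg hν fun _ => prob_nonneg hW _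

theorem expectedReach_le_two (hν : ν ∈ stdSimplex ℝ Λ) (hW : W ∈ stdSimplex ℝ (ι → Bool))
    (S : Finset ι) : expectedReach W ν Good S ≤ 2 := by
  refine (Finset.sum_le_card_nsmul _ _ 1 fun b _ => ?_).trans_eq (by simp)
  exact (mean_mono hν fun _ => prob_le_one hW _).trans (mean_const hν 1).le

theorem le_sum_mean_reachProb_pow_add (hν : ν ∈ stdSimplex ℝ Λ) (hW : W ∈ stdSimplex ℝ (ι → Bool))
    (hGood : ∀ x, ∃ b, ρ ≤ prob ν fun l => Good l b x) (m : ℕ) (S : Finset ι) :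
    ρ ≤ ∑ b, mean ν (fun l => reachProb W (Good l b) S ^ m)
      + m * (spread W m (expectedReach W ν Good) S - expectedReach W ν Good S) := by
  have hWm := piWeight_mem_stdSimplex fun _ : Fin m => hW
  calc ρ
      ≤ mean (piWeight fun _ : Fin m => W) fun ys => ∑ b, prob ν fun l => Good l b (orAll ys) := by
        rw [← mean_const hWm ρ]
        exact mean_mono hWm fun ys => le_sum_bool_of_exists_le (fun b => prob_nonneg hν _) (hGood _)
    _ = ∑ b, mean ν fun l => prob (piWeight fun _ : Fin m => W) fun ys => Good l b (orAll ys) := by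
        rw [mean_sum]
        exact Finset.sum_congr rfl fun b _ => mean_comm _
    _ ≤ ∑ b, mean ν fun l => reachProb W (Good l b) S ^ m
          + m * (spread W m (reachProb W (Good l b)) S - reachProb W (Good l b) S) :=
        Finset.sum_le_sum fun b _ => mean_mono hν fun l => prob_orAll_le hW m _ S
    _ = _ := by
        simp only [mean_add, mean_const_mul, mean_sub, Finset.sum_add_distrib,
          Finset.sum_sub_distrib, ← Finset.mul_sum, spread_expectedReach, expectedReach]

theorem exists_le_spread_sum_mean_ind (hν : ν ∈ stdSimplex ℝ Λ) (hW : W ∈ stdSimplex ℝ (ι → Bool))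
    (hGood : ∀ x, ∃ b, ρ ≤ prob ν fun l => Good l b x) (he : e ≤ 1) {m N : ℕ} (hN : 0 < N)
    (hmN : m * (2 / (N : ℝ)) ≤ ρ / 2) (hem : (1 - e) ^ m ≤ ρ / 8) :
    ∃ k < N, ρ / 4 ≤ spread W (k * m)
      (fun S => ∑ b, mean ν fun l => ind (1 - e ≤ reachProb W (Good l b) S)) ∅ := by
  set Φ := expectedReach W ν Good
  obtain ⟨k, hk, hstep⟩ : ∃ k < N, spread W ((k + 1) * m) Φ ∅ - spread W (k * m) Φ ∅ ≤ 2 / N :=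
    exists_sub_le_div_of_bounded (u := fun k => spread W (k * m) Φ ∅)
      (mean_nonneg (piWeight_mem_stdSimplex fun _ => hW) fun _ => expectedReach_nonneg hν hW _) hN
      ((spread_mono hW _ (expectedReach_le_two hν hW) ∅).trans (spread_const hW _ 2 ∅).le)
  refine ⟨k, hk, ?_⟩
  have hpow : ∀ S, ∑ b, mean ν (fun l => reachProb W (Good l b) S ^ m)
      ≤ ∑ b, mean ν (fun l => ind (1 - e ≤ reachProb W (Good l b) S)) + ρ / 4 := fun S => by
    refine (Finset.sum_le_sum fun b _ =>
      mean_mono hν fun l => reachProb_pow_le hW he hem S).trans ?_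
    simp only [mean_add, mean_const hν, Fintype.sum_bool]
    linarith
  have hmain := spread_mono hW (k * m) (fun S =>
    (le_sum_mean_reachProb_pow_add hν hW hGood m S).trans (add_le_add_left (hpow S) _)) ∅
  have hlin : ∀ F : Finset ι → ℝ, spread W (k * m) (fun S => F S + ρ / 4
      + m * (spread W m Φ S - Φ S)) ∅ = spread W (k * m) F ∅ + ρ / 4
      + m * (spread W ((k + 1) * m) Φ ∅ - spread W (k * m) Φ ∅) := fun F => by
    rw [add_one_mul, spread_add]
    simp only [spread, mean_add, mean_const_mul, mean_sub,
      mean_const (piWeight_mem_stdSimplex fun _ => hW)]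
  rw [hlin, spread_const hW] at hmain
  have := mul_le_mul_of_nonneg_left hstep (Nat.cast_nonneg (α := ℝ) m)
  linarith

theorem exists_le_prob_reachProb_orAll (hν : ν ∈ stdSimplex ℝ Λ) (hW : W ∈ stdSimplex ℝ (ι → Bool))
    (hGood : ∀ x, ∃ b, ρ ≤ prob ν fun l => Good l b x) (he : e ≤ 1) {m N : ℕ} (hN : 0 < N)
    (hmN : m * (2 / (N : ℝ)) ≤ ρ / 2) (hem : (1 - e) ^ m ≤ ρ / 8) :
    ∃ b, ρ / 8 ≤ prob (prodWeight ν (piWeight fun _ : Fin (N * m) => W))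
      fun q => 1 - e ≤ reachProb W (Good q.1 b) (trueSet (orAll q.2)) := by
  obtain ⟨k, hk, h⟩ := exists_le_spread_sum_mean_ind hν hW hGood he hN hmN hem
  have hmono : Monotone fun S =>
      ∑ b, mean ν fun l => ind (1 - e ≤ reachProb W (Good l b) S) := fun S S' hS =>
    Finset.sum_le_sum fun b _ => mean_mono hν fun l =>
      ind_mono fun hl => hl.trans (reachProb_mono hW _ hS)
  have hfull := h.trans (spread_le_spread hW hmono (Nat.mul_le_mul_right m hk.le) ∅)
  rw [spread_sum_mean ν _ fun b l S => ind (1 - e ≤ reachProb W (Good l b) S)] at hfull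
  obtain ⟨b, hb⟩ := exists_half_le_of_le_sum_bool hfull
  refine ⟨b, le_trans (by linarith) (hb.trans_eq ?_)⟩
  rw [prob_prodWeight]
  simp only [spread, Finset.empty_union, prob]

theorem roundScheme_of_weight_le {n : ℕ} {w : Fin n → Bool → ℝ} (hw : ∀ j, w j ∈ stdSimplex ℝ Bool)
    (hn : 1 ≤ n) {η Δ : ℝ} (hη : ∀ j, w j true ≤ η) (he : e ≤ 1) (hΔ : 0 < Δ) {m N : ℕ} (hN : 0 < N)
    (hmN : m * (2 / (N : ℝ)) ≤ ρ / 2) (hem : (1 - e) ^ m ≤ ρ / 8)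
    (hηΔ : (N * m : ℕ) * η ≤ ρ / 16 * Δ) : RoundScheme n w (Δ * n) e ρ (ρ / 16) := by
  have : (1 : ℝ) ≤ n := mod_cast hn
  have hW := piWeight_mem_stdSimplex hw
  have hWT := piWeight_mem_stdSimplex fun _ : Fin (N * m) => hW
  refine ⟨_, inferInstance, _, fun ys => truncate (Δ * n) (trueSet (orAll ys)), hWT,
    fun ys => card_truncate_le (by positivity) _, fun Λ' _ ν' hν' Good hGood => ?_⟩
  obtain ⟨b, hb⟩ := exists_le_prob_reachProb_orAll hν' hW hGood he hN hmN hem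
  refine ⟨b, ?_⟩
  have hlarge : prob (piWeight fun _ : Fin (N * m) => piWeight w)
      (fun ys => Δ * n < (trueSet (orAll ys)).card) ≤ ρ / 16 := by
    refine (prob_lt_le_mean_div hWT (fun ys => Nat.cast_nonneg _) (by positivity)).trans ?_
    rw [div_le_iff₀ (by positivity)]
    refine (mean_card_trueSet_orAll_le hw hη _).trans ?_
    rw [Fintype.card_fin, ← mul_assoc, ← mul_assoc]
    gcongr
  have hν := prodWeight_mem_stdSimplex hν' hWT
  have hlarge' : prob (prodWeight ν' (piWeight fun _ : Fin (N * m) => piWeight w))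
      (fun q => ¬((trueSet (orAll q.2)).card : ℝ) ≤ Δ * n) ≤ ρ / 16 := by
    simp only [prob_prodWeight, not_le]
    exact (mean_const hν' _).trans_le hlarge
  have hand := prob_sub_prob_not_le_prob_and hν
    (fun q => 1 - e ≤ reachProb (piWeight w) (Good q.1 b) (trueSet (orAll q.2)))
    fun q => ((trueSet (orAll q.2)).card : ℝ) ≤ Δ * n
  refine (by linarith : ρ / 16 ≤ _).trans (hand.trans (prob_mono hν ?_))
  rintro ⟨l, ys⟩ ⟨hreach, hcard⟩
  dsimp only at hreach hcard ⊢
  rwa [truncate_of_card_le hcard]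

end Rare

/-! ### One round with arbitrary bits -/

section Compose

variable {n : ℕ} {w wz wy : Fin n → Bool → ℝ}

theorem RoundScheme.mono_size {size size' e ρ ρ' : ℝ} (h : RoundScheme n w size e ρ ρ')
    (hsize : size ≤ size') : RoundScheme n w size' e ρ ρ' :=
  let ⟨Λ, _, ν, B, hν, hB, hscheme⟩ := h
  ⟨Λ, _, ν, B, hν, fun l => (hB l).trans hsize, hscheme⟩

theorem Reaches.union_map {ι Ω Ω' Ω'' : Type*} [DecidableEq ι] {S T : Finset ι}
    {h : ι → Ω × Ω' → Ω''} {z : ι → Ω} {y : ι → Ω'} {g : (ι → Ω'') → Prop}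
    (hzy : ∃ z' : ι → Ω, (∀ j, j ∉ T → z' j = z j) ∧
      Reaches S y fun y' => g fun j => h j (z' j, y' j)) :
    Reaches (S ∪ T) (fun j => h j (z j, y j)) g := by
  obtain ⟨z', hz', y', hy', hg⟩ := hzy
  refine ⟨_, fun j hj => ?_, hg⟩
  rw [Finset.notMem_union] at hj
  rw [hz' j hj.2, hy' j hj.1]

theorem mul_le_reachProb_union (hwz : ∀ j, wz j ∈ stdSimplex ℝ Bool)
    (hwy : ∀ j, wy j ∈ stdSimplex ℝ Bool) {h : Fin n → Bool × Bool → Bool}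
    (hmap : ∀ j (u : Bool → ℝ),
      mean (prodWeight (wz j) (wy j)) (fun q => u (h j q)) = mean (w j) u)
    {S T : Finset (Fin n)} {g : (Fin n → Bool) → Prop} {p q : ℝ} (hq : 0 ≤ q)
    (hp : p ≤ reachProb (piWeight wz)
      (fun z => q ≤ reachProb (piWeight wy) (fun y => g fun j => h j (z j, y j)) S) T) :
    p * q ≤ reachProb (piWeight w) g (S ∪ T) := by
  calc p * q ≤ prob (prodWeight (piWeight wz) (piWeight wy))
        fun x => Reaches (S ∪ T) (fun j => h j (x.1 j, x.2 j)) g := by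
        refine mul_le_prob_prodWeight (piWeight_mem_stdSimplex hwz) (piWeight_mem_stdSimplex hwy)
          hq hp ?_
        rintro z ⟨z', hz', hreach⟩
        exact hreach.trans <| prob_mono (piWeight_mem_stdSimplex hwy) fun y hy =>
          Reaches.union_map ⟨z', hz', hy⟩
    _ = _ := by
        rw [prob, mean_prodWeight, ← mean_piWeight_prodWeight wz wy fun z y =>
          ind (Reaches (S ∪ T) (fun j => h j (z j, y j)) g), reachProb, prob,
          ← mean_piWeight_map _ w h hmap]

theorem roundScheme_compose (hwz : ∀ j, wz j ∈ stdSimplex ℝ Bool)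
    (hwy : ∀ j, wy j ∈ stdSimplex ℝ Bool) {h : Fin n → Bool × Bool → Bool}
    (hmap : ∀ j (u : Bool → ℝ),
      mean (prodWeight (wz j) (wy j)) (fun q => u (h j q)) = mean (w j) u)
    {sy sz ey ez ρ ρ₁ ρ₂ : ℝ} (hey : 0 ≤ ey) (hey1 : ey ≤ 1) (hez : 0 ≤ ez)
    (hy : RoundScheme n wy sy ey ρ ρ₁) (hz : RoundScheme n wz sz ez ρ₁ ρ₂) :
    RoundScheme n w (sy + sz) (ey + ez) ρ ρ₂ := by
  obtain ⟨Λy, _, νy, By, hνy, hsy, hy⟩ := hy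
  obtain ⟨Λz, _, νz, Bz, hνz, hsz, hz⟩ := hz
  refine ⟨Λy × Λz, inferInstance, prodWeight νy νz, fun q => By q.1 ∪ Bz q.2,
    prodWeight_mem_stdSimplex hνy hνz, fun q => ?_, fun Λ' _ ν' hν' Good hGood => ?_⟩
  · refine le_trans ?_ (add_le_add (hsy q.1) (hsz q.2))
    exact_mod_cast Finset.card_union_le _ _
  obtain ⟨b, hb⟩ := hz (Λ' × Λy) inferInstance (prodWeight ν' νy)
    (prodWeight_mem_stdSimplex hν' hνy)
    (fun q b z => 1 - ey
      ≤ reachProb (piWeight wy) (fun y => Good q.1 b fun j => h j (z j, y j)) (By q.2))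
    fun z => hy Λ' inferInstance ν' hν' (fun l b y => Good l b fun j => h j (z j, y j))
      fun y => hGood _
  refine ⟨b, ?_⟩
  simp only [prob_prodWeight]
  rw [prob, mean_prodWeight, mean_prodWeight] at hb
  refine hb.trans <| mean_mono hν' fun l => mean_mono hνy fun ly => prob_mono hνz fun lz hlz => ?_
  calc 1 - (ey + ez) ≤ (1 - ez) * (1 - ey) := by nlinarith
    _ ≤ _ := mul_le_reachProb_union hwz hwy hmap (by linarith) hlz

theorem exists_bit_split {v : Bool → ℝ} (hv : v ∈ stdSimplex ℝ Bool) {η : ℝ} (hη : 0 ≤ η)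
    (hη2 : η ≤ 1 / 2) :
    ∃ vz ∈ stdSimplex ℝ Bool, ∃ vy ∈ stdSimplex ℝ Bool, ∃ h : Bool × Bool → Bool,
      (∀ u : Bool → ℝ, mean (prodWeight vz vy) (fun q => u (h q)) = mean v u) ∧
      (∀ a, η ≤ vz a) ∧ vy true ≤ η := by
  have hsum : v true + v false = 1 := by simpa using hv.2
  have hhalf : bernWeight (1 / 2) ∈ stdSimplex ℝ Bool :=
    bernWeight_mem_stdSimplex (by norm_num) (by norm_num)
  have hηhalf : ∀ a, η ≤ bernWeight (1 / 2) a := by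
    have : bernWeight (1 / 2) = fun _ => 1 / 2 := by ext a; cases a <;> norm_num [bernWeight]
    simpa only [this] using fun _ => hη2
  rcases lt_or_ge (v true) η with ht | ht
  · refine ⟨_, hhalf, v, hv, Prod.snd, fun u => ?_, hηhalf, ht.le⟩
    rw [mean_prodWeight]
    exact mean_const hhalf _
  rcases lt_or_ge (v false) η with hf | hf
  · refine ⟨_, hhalf, fun a => v !a, ⟨fun a => hv.1 _, ?_⟩, fun q => !q.2, fun u => ?_, hηhalf,
      hf.le⟩
    · simp only [Fintype.sum_bool, Bool.not_true, Bool.not_false]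
      linarith
    · rw [mean_prodWeight]
      refine (mean_const hhalf _).trans ?_
      simp only [mean, Fintype.sum_bool, Bool.not_true, Bool.not_false]
      ring
  · refine ⟨v, hv, bernWeight 0, bernWeight_mem_stdSimplex le_rfl zero_le_one, Prod.fst,
      fun u => ?_, fun a => ?_, hη⟩
    · rw [mean_prodWeight]
      simp only [mean_const (bernWeight_mem_stdSimplex le_rfl zero_le_one)]
    · cases a
      exacts [hf, ht]

theorem roundScheme_of_rare_of_nonrare (hw : ∀ j, w j ∈ stdSimplex ℝ Bool) {η : ℝ} (hη : 0 ≤ η)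
    (hη2 : η ≤ 1 / 2) {sy sz ey ez ρ ρ₁ ρ₂ : ℝ} (hey : 0 ≤ ey) (hey1 : ey ≤ 1) (hez : 0 ≤ ez)
    (hrare : ∀ wy : Fin n → Bool → ℝ, (∀ j, wy j ∈ stdSimplex ℝ Bool) → (∀ j, wy j true ≤ η) →
      RoundScheme n wy sy ey ρ ρ₁)
    (hnonrare : ∀ wz : Fin n → Bool → ℝ, (∀ j, wz j ∈ stdSimplex ℝ Bool) → (∀ j a, η ≤ wz j a) →
      RoundScheme n wz sz ez ρ₁ ρ₂) :
    RoundScheme n w (sy + sz) (ey + ez) ρ ρ₂ := by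
  choose wz hwz wy hwy h hmap hzη hyη using fun j => exists_bit_split (hw j) hη hη2
  exact roundScheme_compose hwz hwy hmap hey hey1 hez (hrare wy hwy hyη) (hnonrare wz hwz hzη)

end Compose

section Parameters

variable {n X : ℕ}

/-- The number of blocks of players given to the coalition for the non-rare bits of a round. It
bounds `1 / influenceFloor` for the parameters used when the coalition must succeed with
probability `1 - 1 / X`. -/
def blockCount (X : ℕ) : ℕ := 2 ^ (2 ^ 34 * X ^ 11)

/-- The inverse of the success probability of a random coalition for one round and all later ones,
when for the later rounds alone this probability is `1 / X`. -/
def roundCost (X : ℕ) : ℕ := 256 * X * (blockCount X * X) ^ blockCount X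

/-- The weight below which a bit value counts as rare. -/
noncomputable def rareThreshold (X : ℕ) : ℝ := 1 / (4096 * X ^ 7)

theorem blockCount_pos (X : ℕ) : 0 < blockCount X := by unfold blockCount; positivity

theorem mul_blockCount_le_roundCost (hX : 1 ≤ X) : 256 * (blockCount X * X) ≤ roundCost X :=
  calc 256 * (blockCount X * X) ≤ 256 * X * (blockCount X * X) :=
        Nat.mul_le_mul_right _ (by omega)
    _ ≤ roundCost X := Nat.mul_le_mul_left _ (Nat.le_self_pow (blockCount_pos X).ne' _)

theorem mul_le_roundCost (hX : 1 ≤ X) : 256 * X ≤ roundCost X :=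
  (Nat.mul_le_mul_left 256 (Nat.le_mul_of_pos_left X (blockCount_pos X))).trans
    (mul_blockCount_le_roundCost hX)

theorem one_sub_inv_pow_le (hX : 1 ≤ X) : (1 - 1 / (X : ℝ)) ^ (8 * X ^ 2) ≤ 1 / X / 8 := by
  have hX' : (1 : ℝ) ≤ X := mod_cast hX
  have hX0 : (0 : ℝ) < X := by linarith
  calc (1 - 1 / (X : ℝ)) ^ (8 * X ^ 2) ≤ Real.exp (-(1 / X)) ^ (8 * X ^ 2) :=
        pow_le_pow_left₀ (sub_nonneg.2 ((div_le_one hX0).2 hX')) (Real.one_sub_le_exp_neg _) _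
    _ = (Real.exp (8 * X))⁻¹ := by
        rw [← Real.exp_nat_mul, ← Real.exp_neg]; congr 1; push_cast; field_simp
    _ ≤ (8 * X : ℝ)⁻¹ :=
        inv_anti₀ (by positivity) (by linarith [Real.add_one_le_exp (8 * (X : ℝ))])
    _ = 1 / X / 8 := by field_simp

theorem one_div_influenceFloor_le_blockCount (hX : 1 ≤ X) :
    1 / influenceFloor (1 / (8 * X) * rareThreshold X) (1 / X / 16 / 4 * (1 / X / 2)) (32 * X)
      ≤ blockCount X := by
  have : (0 : ℝ) < X := mod_cast hX
  have hexponent : 34 * (32 * X) / (1 / (8 * X) * rareThreshold X * (1 / X / 16 / 4 * (1 / X / 2)))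
      = (34 * 2 ^ 27 * X ^ 11 : ℕ) * (1 : ℝ) := by
    rw [rareThreshold]; push_cast; field_simp; norm_num
  have hfour : ∀ k, (4 : ℝ) * 4 ^ k = 2 ^ (2 * (k + 1)) := fun k => by
    rw [pow_mul, pow_succ']; norm_num
  calc _ = 4 * Real.exp 1 ^ (34 * 2 ^ 27 * X ^ 11) := by
        rw [influenceFloor, hexponent, Real.exp_neg, Real.exp_nat_mul]; field_simp
    _ ≤ 4 * 4 ^ (34 * 2 ^ 27 * X ^ 11) := by
        gcongr; linarith [Real.exp_one_lt_three]
    _ = 2 ^ (2 * (34 * 2 ^ 27 * X ^ 11 + 1)) := hfour _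
    _ ≤ blockCount X := by
        have : 1 ≤ X ^ 11 := Nat.one_le_pow _ _ hX
        rw [blockCount]; push_cast
        exact pow_le_pow_right₀ one_le_two (by omega)

theorem exists_walk_length (hX : 1 ≤ X) (hn : 8 * X ≤ n) :
    ∃ M : ℕ, (4 * n : ℝ) < M * (32 * X) ∧ 1 / (8 * X : ℝ) + M / (2 * n) ≤ 1 / (4 * X) := by
  have hX0 : (0 : ℝ) < X := mod_cast hX
  have hn' : (8 * X : ℝ) ≤ n := mod_cast hn
  have hn0 : (0 : ℝ) < n := by linarith
  refine ⟨⌊(n : ℝ) / (8 * X)⌋₊ + 1, ?_, ?_⟩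
  · have := (div_lt_iff₀ (by positivity)).1 (Nat.lt_floor_add_one ((n : ℝ) / (8 * X)))
    push_cast
    linarith
  · have hfloor := Nat.floor_le (show 0 ≤ (n : ℝ) / (8 * X) by positivity)
    have hone : 1 ≤ (n : ℝ) / (8 * X) := (one_le_div (by positivity)).2 hn'
    calc 1 / (8 * X : ℝ) + (⌊(n : ℝ) / (8 * X)⌋₊ + 1 : ℕ) / (2 * n)
        ≤ 1 / (8 * X) + (n / (8 * X) + n / (8 * X)) / (2 * n) := by push_cast; gcongr
      _ = 1 / (4 * X) := by field_simp; norm_num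

variable {w : Fin n → Bool → ℝ}

theorem roundScheme_rare (hw : ∀ j, w j ∈ stdSimplex ℝ Bool) (hX : 1 ≤ X) (hn : 1 ≤ n)
    (hrare : ∀ j, w j true ≤ rareThreshold X) :
    RoundScheme n w (1 / X * n) (1 / X) (1 / X) (1 / X / 16) := by
  have hX' : (1 : ℝ) ≤ X := mod_cast hX
  refine roundScheme_of_weight_le hw hn hrare ((div_le_one (by positivity)).2 hX') (by positivity)
    (m := 8 * X ^ 2) (N := 32 * X ^ 3) (by positivity) ?_ (one_sub_inv_pow_le hX) ?_
  · push_cast; apply le_of_eq; field_simp; norm_num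
  · rw [rareThreshold]; push_cast; apply le_of_eq; field_simp; norm_num

theorem nonrare_size_le (hX : 1 ≤ X) (hn : roundCost X ≤ n) {t : ℝ} (ht : t ≤ 1 / (4 * X)) :
    4 * t * n + blockCount X * (n / (blockCount X * X : ℕ) + 1) ≤ 3 * n / X := by
  have hX0 : (0 : ℝ) < X := mod_cast hX
  have hc0 : (0 : ℝ) < blockCount X := mod_cast blockCount_pos X
  have hc : (blockCount X : ℝ) ≤ n / X := by
    rw [le_div_iff₀ hX0]
    exact_mod_cast (by omega : blockCount X * X ≤ 256 * (blockCount X * X)).trans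
      ((mul_blockCount_le_roundCost hX).trans hn)
  calc 4 * t * n + blockCount X * (n / (blockCount X * X : ℕ) + 1)
      = 4 * t * n + (n / X + blockCount X) := by push_cast; field_simp
    _ ≤ 4 * (1 / (4 * X)) * n + (n / X + n / X) := by gcongr
    _ = 3 * n / X := by field_simp; norm_num

theorem roundScheme_nonrare (hw : ∀ j, w j ∈ stdSimplex ℝ Bool) (hX : 1 ≤ X) (hn : roundCost X ≤ n)
    (hnonrare : ∀ j a, rareThreshold X ≤ w j a) :
    RoundScheme n w (3 * n / X) (1 / X) (1 / X / 16) (1 / roundCost X) := by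
  have hX' : (1 : ℝ) ≤ X := mod_cast hX
  have hXn := (mul_le_roundCost hX).trans hn
  obtain ⟨M, hMK, hsM⟩ := exists_walk_length (n := n) hX (by omega)
  have hη0 : 0 < rareThreshold X := by unfold rareThreshold; positivity
  have hη1 : rareThreshold X ≤ 1 := by
    rw [rareThreshold, div_le_one (by positivity)]; linarith [one_le_pow₀ (n := 7) hX']
  have hscheme := roundScheme_of_le_weight hw (by omega) hη0 hη1 hnonrare (by positivity)
    (hsM.trans (one_div_le_one_div_of_le two_pos (by linarith))) (by positivity) hMK
    (by positivity) (by positivity) (one_div_influenceFloor_le_blockCount hX)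
    (N := blockCount X * X) (Nat.mul_pos (blockCount_pos X) hX)
  convert hscheme.mono_size (nonrare_size_le hX hn hsM) using 1
  rw [roundCost, one_div_pow]
  push_cast
  rw [div_div, div_div, div_mul_div_comm, one_mul]
  ring

theorem roundScheme_of_roundCost_le (hw : ∀ j, w j ∈ stdSimplex ℝ Bool) (hX : 1 ≤ X)
    (hn : roundCost X ≤ n) : RoundScheme n w (4 * n / X) (2 / X) (1 / X) (1 / roundCost X) := by
  have hX' : (1 : ℝ) ≤ X := mod_cast hX
  have hXn := (mul_le_roundCost hX).trans hn
  have hη2 : rareThreshold X ≤ 1 / 2 :=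
    one_div_le_one_div_of_le two_pos (by linarith [one_le_pow₀ (n := 7) hX'])
  have hη0 : 0 ≤ rareThreshold X := by unfold rareThreshold; positivity
  have hscheme := roundScheme_of_rare_of_nonrare hw hη0 hη2 (by positivity)
    ((div_le_one (by positivity)).2 hX') (by positivity)
    (fun _ hwy => roundScheme_rare hwy hX (by omega)) fun _ hwz => roundScheme_nonrare hwz hX hn
  convert hscheme using 1 <;> ring

end Parameters

/-! ### All rounds -/

section MultiRound

variable {n : ℕ}

/-- `B` can force the output `b` of an `r`-round protocol up to the errors `e`: except with
probability `e (r - 1)` over the first round, it can bring about a round string from which it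
controls the remaining rounds. The errors are indexed from the last round. -/
def Controls (e : ℕ → ℝ) (B : Finset (Fin n)) (b : Bool) :
    (r : ℕ) → (Fin r → Fin n → Bool → ℝ) → ((Fin r → Fin n → Bool) → Bool) → Prop
  | 0, _, f => f Fin.elim0 = b
  | r + 1, ws, f => 1 - e r ≤ reachProb (piWeight (ws 0))
      (fun y => Controls e B b r (Fin.tail ws) fun t => f (Fin.cons y t)) B

theorem Controls.mono {e : ℕ → ℝ} {B B' : Finset (Fin n)} (hB : B ⊆ B') {b : Bool} {r : ℕ}
    {ws : Fin r → Fin n → Bool → ℝ} (hws : ∀ i j, ws i j ∈ stdSimplex ℝ Bool)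
    {f : (Fin r → Fin n → Bool) → Bool} (h : Controls e B b r ws f) : Controls e B' b r ws f := by
  induction r with
  | zero => exact h
  | succ r ih =>
    exact h.trans <| prob_mono (piWeight_mem_stdSimplex (hws 0)) fun x hx =>
      hx.mono hB fun y hy => ih (fun i j => hws _ _) hy

theorem one_le_iterate_roundCost {X : ℕ} (hX : 1 ≤ X) (k : ℕ) : 1 ≤ roundCost^[k] X := by
  induction k with
  | zero => exact hX
  | succ k ih =>
    rw [Function.iterate_succ_apply']
    have := mul_le_roundCost ih
    omega

theorem exists_random_coalition_controls {X : ℕ} (hX : 1 ≤ X) (r : ℕ)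
    (ws : Fin r → Fin n → Bool → ℝ) (hws : ∀ i j, ws i j ∈ stdSimplex ℝ Bool)
    (hn : roundCost^[r] X ≤ n) :
    ∃ (Λ : Type) (_ : Fintype Λ) (ν : Λ → ℝ) (B : Λ → Finset (Fin n)), ν ∈ stdSimplex ℝ Λ ∧
      (∀ l, ((B l).card : ℝ) ≤ ∑ i ∈ Finset.range r, 4 * n / (roundCost^[i] X : ℝ)) ∧
      ∀ f : (Fin r → Fin n → Bool) → Bool, ∃ b, 1 / (roundCost^[r] X : ℝ) ≤ prob ν fun l =>
        Controls (fun i => 2 / (roundCost^[i] X : ℝ)) (B l) b r ws f := by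
  induction r with
  | zero =>
    refine ⟨Unit, inferInstance, fun _ => 1, fun _ => ∅, ⟨fun _ => zero_le_one, by simp⟩, by simp,
      fun f => ⟨f Fin.elim0, ?_⟩⟩
    have hX' : (1 : ℝ) ≤ X := mod_cast hX
    simpa [prob, mean, Controls, ind_of_true] using inv_le_one_of_one_le₀ hX'
  | succ r ih =>
    have hX' := one_le_iterate_roundCost hX r
    rw [Function.iterate_succ_apply'] at hn
    obtain ⟨Λ, _, ν, B, hν, hB, hcontrols⟩ := ih (Fin.tail ws) (fun i j => hws _ _)
      (by have := mul_le_roundCost hX'; omega)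
    obtain ⟨Λ₁, _, ν₁, B₁, hν₁, hB₁, hround⟩ := roundScheme_of_roundCost_le (hws 0) hX' hn
    refine ⟨Λ × Λ₁, inferInstance, prodWeight ν ν₁, fun q => B q.1 ∪ B₁ q.2,
      prodWeight_mem_stdSimplex hν hν₁, fun q => ?_, fun f => ?_⟩
    · rw [Finset.sum_range_succ]
      refine le_trans ?_ (add_le_add (hB q.1) (hB₁ q.2))
      exact_mod_cast Finset.card_union_le _ _
    · obtain ⟨b, hb⟩ := hround Λ inferInstance ν hν
        (fun l b y => Controls (fun i => 2 / (roundCost^[i] X : ℝ)) (B l) b r (Fin.tail ws)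
          fun t => f (Fin.cons y t)) fun y => hcontrols _
      refine ⟨b, ?_⟩
      rw [Function.iterate_succ_apply']
      refine hb.trans (prob_mono (prodWeight_mem_stdSimplex hν hν₁) fun q hq => hq.trans ?_)
      exact prob_mono (piWeight_mem_stdSimplex (hws 0)) fun x hx =>
        hx.mono Finset.subset_union_right fun y hy =>
          hy.mono Finset.subset_union_left fun i j => hws _ _

end MultiRound

section Strategies

variable {n r : ℕ} {B : Finset (Fin n)}

theorem mean_piWeight_cons {Ω : Type*} [Fintype Ω] (w : Fin (r + 1) → Ω → ℝ)
    (F : (Fin (r + 1) → Ω) → ℝ) :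
    mean (piWeight w) F
      = mean (w 0) fun y => mean (piWeight (Fin.tail w)) fun ys => F (Fin.cons y ys) := by
  simp only [mean]
  rw [← (Fin.consEquiv fun _ : Fin (r + 1) => Ω).sum_comp, Fintype.sum_prod_type]
  simp [piWeight, Fin.prod_univ_succ, Fin.consEquiv, Fin.tail, mul_assoc, Finset.mul_sum]

/-- The strategy that answers the first round by `σ` and continues with the strategy `π h`, where
`h` is what the other players broadcast in the first round. -/
def consStrategy (σ : ({j : Fin n // j ∉ B} → Bool) → Fin n → Bool)
    (π : ({j : Fin n // j ∉ B} → Bool) → Strategy n r B) : Strategy n (r + 1) B :=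
  fun i => Fin.cases (motive := fun i : Fin (r + 1) =>
      (Fin (i.val + 1) → {j : Fin n // j ∉ B} → Bool) → Fin n → Bool)
    (fun h => σ (h 0)) (fun i' h => π (h 0) i' fun k => h k.succ) i

theorem execP_consStrategy (σ : ({j : Fin n // j ∉ B} → Bool) → Fin n → Bool)
    (π : ({j : Fin n // j ∉ B} → Bool) → Strategy n r B) (x : Fin n → Bool)
    (α : Fin r → Fin n → Bool) :
    execP B (consStrategy σ π) (Fin.cons x α)
      = Fin.cons (fun j => if j ∈ B then σ (fun j' => x j') j else x j)
          (execP B (π fun j' => x j') α) := by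
  ext i j
  refine Fin.cases rfl (fun i' => rfl) i

theorem exists_response (B : Finset (Fin n)) (g : (Fin n → Bool) → Prop) :
    ∃ σ : ({j : Fin n // j ∉ B} → Bool) → Fin n → Bool, ∀ x, Reaches B x g →
      (∀ j, j ∉ B → σ (fun j' => x j') j = x j) ∧ g (σ fun j' => x j') := by
  have hresponse : ∀ h : {j : Fin n // j ∉ B} → Bool, ∃ y : Fin n → Bool,
      (∃ y' : Fin n → Bool, (∀ j : {j : Fin n // j ∉ B}, y' j = h j) ∧ g y') →
        (∀ j : {j : Fin n // j ∉ B}, y j = h j) ∧ g y := fun h => by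
    by_cases hy : ∃ y' : Fin n → Bool, (∀ j : {j : Fin n // j ∉ B}, y' j = h j) ∧ g y'
    · exact hy.imp fun _ hy' _ => hy'
    · exact ⟨fun _ => false, fun h' => absurd h' hy⟩
  choose σ hσ using hresponse
  refine ⟨σ, fun x ⟨y, hy, hgy⟩ => ?_⟩
  obtain ⟨hσx, hg⟩ := hσ (fun j' => x j') ⟨y, fun j => hy j j.2, hgy⟩
  exact ⟨fun j hj => hσx ⟨j, hj⟩, hg⟩

theorem exists_cons_strategy {ws : Fin (r + 1) → Fin n → Bool → ℝ}
    (hws : ∀ i j, ws i j ∈ stdSimplex ℝ Bool) {f : (Fin (r + 1) → Fin n → Bool) → Bool} {b : Bool}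
    {g : (Fin n → Bool) → Prop} {p q : ℝ} (hq : 0 ≤ q) (hp : p ≤ reachProb (piWeight (ws 0)) g B)
    (hg : ∀ y, g y → ∃ π : Strategy n r B, q ≤ prob (piWeight fun i : Fin r => piWeight (ws i.succ))
      fun α => f (Fin.cons y (execP B π α)) = b) :
    ∃ π : Strategy n (r + 1) B, p * q ≤ prob (piWeight fun i => piWeight (ws i))
      fun α => f (execP B π α) = b := by
  have : Nonempty (Strategy n r B) := ⟨fun _ _ _ => false⟩
  obtain ⟨σ, hσ⟩ := exists_response B g
  choose! π hπ using hg
  refine ⟨consStrategy σ fun h => π (σ h), ?_⟩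
  have hW := fun i => piWeight_mem_stdSimplex (hws i)
  have hWtail := piWeight_mem_stdSimplex fun i : Fin r => hW i.succ
  refine (mul_le_prob_prodWeight (hW 0) hWtail hq hp
    (Q := fun x => f (execP B (consStrategy σ fun h => π (σ h)) (Fin.cons x.1 x.2)) = b)
    fun x hx => ?_).trans_eq ?_
  · obtain ⟨hσx, hgσ⟩ := hσ x hx
    have hround : (fun j => if j ∈ B then σ (fun j' => x j') j else x j) = σ fun j' => x j' := by
      ext j
      split_ifs with hj
      exacts [rfl, (hσx j hj).symm]
    simp only [execP_consStrategy, hround]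
    exact hπ _ hgσ
  · rw [prob_prodWeight, prob, mean_piWeight_cons]
    rfl

theorem Controls.exists_strategy {e : ℕ → ℝ} (he : ∀ i, 0 ≤ e i) {b : Bool}
    {ws : Fin r → Fin n → Bool → ℝ} (hws : ∀ i j, ws i j ∈ stdSimplex ℝ Bool)
    {f : (Fin r → Fin n → Bool) → Bool} (hsum : ∑ i ∈ Finset.range r, e i ≤ 1)
    (h : Controls e B b r ws f) : ∃ π : Strategy n r B, 1 - ∑ i ∈ Finset.range r, e i
      ≤ prob (piWeight fun i => piWeight (ws i)) fun α => f (execP B π α) = b := by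
  induction r with
  | zero =>
    refine ⟨fun i => i.elim0, ?_⟩
    have hf : ∀ t, f t = b := fun t => (congrArg f (Subsingleton.elim _ _)).trans h
    simp [prob, mean, piWeight, hf, ind_of_true]
  | succ r ih =>
    rw [Finset.sum_range_succ] at hsum ⊢
    have her := he r
    have hsum0 : 0 ≤ ∑ i ∈ Finset.range r, e i := Finset.sum_nonneg fun i _ => he i
    obtain ⟨π, hπ⟩ := exists_cons_strategy hws (by linarith) h fun y hy =>
      ih (fun i j => hws _ _) (by linarith) hy
    exact ⟨π, le_trans (by nlinarith) hπ⟩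

end Strategies

/-! ### Growth of the thresholds -/

section Growth

variable {X : ℕ}

theorem blockCount_exponent_le (hX : 8 ≤ X) : 2 + 2 * (2 ^ 34 * X ^ 11) ≤ 2 ^ 2 ^ X := by
  have hpos : 0 < X ^ 11 := by positivity
  have hlin : 36 + 11 * X ≤ 2 ^ X := by
    clear hpos
    induction X, hX using Nat.le_induction with
    | base => norm_num
    | succ k hk ih => rw [pow_succ]; omega
  calc 2 + 2 * (2 ^ 34 * X ^ 11) ≤ 2 ^ 36 * X ^ 11 := by omega
    _ ≤ 2 ^ 36 * (2 ^ X) ^ 11 := by gcongr; exact Nat.lt_two_pow_self.le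
    _ = 2 ^ (36 + 11 * X) := by rw [pow_add, ← pow_mul, mul_comm X 11]
    _ ≤ 2 ^ 2 ^ X := Nat.pow_le_pow_right two_pos hlin

theorem roundCost_le_tower (hX : 8 ≤ X) : roundCost X ≤ 2 ^ 2 ^ 2 ^ 2 ^ X := by
  obtain ⟨p, hp⟩ : ∃ p, p = 2 ^ 34 * X ^ 11 := ⟨_, rfl⟩
  have hXp : 8 + X ≤ p := by
    have := Nat.le_self_pow (show 11 ≠ 0 by norm_num) X
    omega
  have hpp : p < 2 ^ p := Nat.lt_two_pow_self
  calc roundCost X = 256 * X * (2 ^ p * X) ^ 2 ^ p := by rw [hp]; rfl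
    _ ≤ 2 ^ 8 * 2 ^ X * (2 ^ p * 2 ^ X) ^ 2 ^ p := by
        gcongr
        exacts [by norm_num, Nat.lt_two_pow_self.le, Nat.lt_two_pow_self.le]
    _ = 2 ^ (8 + X + (p + X) * 2 ^ p) := by rw [← pow_add, ← pow_add, ← pow_mul, ← pow_add]
    _ ≤ 2 ^ 2 ^ (2 + 2 * p) := by
        refine Nat.pow_le_pow_right two_pos ?_
        rw [pow_add, two_mul p, pow_add]
        nlinarith
    _ ≤ 2 ^ 2 ^ 2 ^ 2 ^ X := by
        rw [hp]; gcongr <;> first | exact one_le_two | exact blockCount_exponent_le hX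

theorem one_lt_iterLog {x : ℝ} {j : ℕ} (hj : j < logStar x) : 1 < iterLog j x :=
  not_le.1 (Nat.notMem_of_lt_sInf hj)

theorem two_pow_le_iterLog {x : ℝ} {j k : ℕ} (hj : 0 < iterLog j x)
    (hk : (k : ℝ) ≤ iterLog (j + 1) x) : ((2 ^ k : ℕ) : ℝ) ≤ iterLog j x := by
  rw [iterLog, Real.le_logb_iff_rpow_le one_lt_two hj, Real.rpow_natCast] at hk
  exact_mod_cast hk

theorem roundCost_le_iterLog {x : ℝ} {j : ℕ} (hX : 8 ≤ X) (hj : j + 4 < logStar x)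
    (hXx : (X : ℝ) ≤ iterLog (j + 4) x) : (roundCost X : ℝ) ≤ iterLog j x := by
  have hpos : ∀ i ≤ 4, 0 < iterLog (j + i) x := fun i hi =>
    one_pos.trans (one_lt_iterLog (by omega))
  refine (Nat.cast_le.2 (roundCost_le_tower hX)).trans ?_
  exact two_pow_le_iterLog (hpos 0 (by norm_num)) <| two_pow_le_iterLog (hpos 1 (by norm_num)) <|
    two_pow_le_iterLog (hpos 2 (by norm_num)) <| two_pow_le_iterLog (hpos 3 (by norm_num)) hXx

theorem iterate_roundCost_le {x : ℝ} {r : ℕ} (hX : 8 ≤ X) (hr : 4 * r < logStar x)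
    (hXx : (X : ℝ) ≤ iterLog (4 * r) x) : (roundCost^[r] X : ℝ) ≤ x := by
  induction r generalizing X with
  | zero => exact hXx
  | succ r ih =>
    rw [Function.iterate_succ_apply]
    have := mul_le_roundCost (X := X) (by omega)
    exact ih (by omega) (by omega) (roundCost_le_iterLog hX hr hXx)

theorem two_pow_mul_le_iterate_roundCost (hX : 1 ≤ X) (i : ℕ) : 2 ^ i * X ≤ roundCost^[i] X := by
  induction i with
  | zero => simp
  | succ i ih =>
    rw [Function.iterate_succ_apply', pow_succ]
    have := mul_le_roundCost (one_le_iterate_roundCost hX i)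
    linarith

theorem sum_div_iterate_roundCost_le (hX : 1 ≤ X) (r : ℕ) {c : ℝ} (hc : 0 ≤ c) :
    ∑ i ∈ Finset.range r, c / (roundCost^[i] X : ℝ) ≤ 2 * c / X := by
  have : (0 : ℝ) < X := mod_cast hX
  calc ∑ i ∈ Finset.range r, c / (roundCost^[i] X : ℝ)
      ≤ ∑ i ∈ Finset.range r, (1 / 2 : ℝ) ^ i * (c / X) := by
        refine Finset.sum_le_sum fun i _ => ?_
        have : ((2 ^ i * X : ℕ) : ℝ) ≤ roundCost^[i] X :=
          mod_cast two_pow_mul_le_iterate_roundCost hX i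
        calc c / (roundCost^[i] X : ℝ) ≤ c / (2 ^ i * X : ℕ) := by gcongr
          _ = (1 / 2 : ℝ) ^ i * (c / X) := by push_cast; rw [one_div_pow]; field_simp
    _ ≤ 2 * (c / X) := by
        rw [← Finset.sum_mul]
        exact mul_le_mul_of_nonneg_right (sum_geometric_two_le r) (by positivity)
    _ = 2 * c / X := by ring

end Growth

/-! ### Random coalitions as probability distributions -/

section Measures

variable {n r : ℕ} {μs : Fin r → Fin n → Measure Bool} {size size' e e' p p' : ℝ}

theorem measureReal_singleton_mem_stdSimplex {Ω : Type*} [Fintype Ω] [MeasurableSpace Ω]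
    [MeasurableSingletonClass Ω] (μ : Measure Ω) [IsProbabilityMeasure μ] :
    (fun a => μ.real {a}) ∈ stdSimplex ℝ Ω := by
  refine ⟨fun _ => measureReal_nonneg, ?_⟩
  rw [sum_measureReal_singleton, Finset.coe_univ, probReal_univ]

theorem measureReal_eq_prob {Ω : Type*} [Fintype Ω] [MeasurableSpace Ω]
    [MeasurableSingletonClass Ω] (μ : Measure Ω) [IsFiniteMeasure μ] (P : Ω → Prop) :
    μ.real {a | P a} = prob (fun a => μ.real {a}) P := by
  classical
  calc μ.real {a | P a} = μ.real (Finset.univ.filter P : Finset Ω) := by simp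
    _ = prob (fun a => μ.real {a}) P := by
        rw [← sum_measureReal_singleton, Finset.sum_filter]
        simp [prob, mean, ind]

theorem measureReal_pi_singleton {ι Ω : Type*} [Fintype ι] [MeasurableSpace Ω]
    (μ : ι → Measure Ω) [∀ j, SigmaFinite (μ j)] :
    (fun x => (Measure.pi μ).real {x}) = piWeight fun j a => (μ j).real {a} := by
  ext x
  simp only [Measure.real, Measure.pi_singleton, ENNReal.toReal_prod, piWeight]

theorem prob_le_IB (hμ : ∀ i j, IsProbabilityMeasure (μs i j))
    (f : (Fin r → Fin n → Bool) → Bool) (B : Finset (Fin n)) (π : Strategy n r B) (b : Bool) :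
    prob (piWeight fun i => piWeight fun j v => (μs i j).real {v}) (fun α => f (execP B π α) = b)
      ≤ IB μs f B b := by
  simp only [← measureReal_pi_singleton, ← measureReal_eq_prob]
  refine ENNReal.toReal_mono ?_ (le_iSup (fun π => IPi μs f B π b) π)
  exact ne_top_of_le_ne_top ENNReal.one_ne_top (iSup_le fun π => MeasureTheory.prob_le_one)

theorem exists_pmf_of_mem_stdSimplex {Λ α : Type*} [Fintype Λ] {ν : Λ → ℝ}
    (hν : ν ∈ stdSimplex ℝ Λ) (B : Λ → α) :
    ∃ ν' : PMF α, (∀ a ∈ ν'.support, ∃ l, B l = a) ∧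
      ∀ P : α → Prop, (ν'.toOuterMeasure {a | P a}).toReal = prob ν fun l => P (B l) := by
  classical
  have hsum : ∑ l, ENNReal.ofReal (ν l) = 1 := by
    rw [← ENNReal.ofReal_sum_of_nonneg fun i _ => hν.1 i, hν.2, ENNReal.ofReal_one]
  refine ⟨(PMF.ofFintype _ hsum).map B, fun a ha => ?_, fun P => ?_⟩
  · obtain ⟨l, _, hl⟩ := (PMF.mem_support_map_iff _ _ _).1 ha
    exact ⟨l, hl⟩
  · rw [PMF.toOuterMeasure_map_apply, PMF.toOuterMeasure_ofFintype_apply, tsum_fintype,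
      ENNReal.toReal_sum fun l _ => ne_top_of_le_ne_top (ENNReal.ofReal_ne_top (r := ν l))
        (Set.indicator_le_self _ _ l)]
    refine Finset.sum_congr rfl fun l _ => ?_
    by_cases h : P (B l) <;>
      simp [ind, h, Set.indicator, ENNReal.toReal_ofReal (hν.1 l)]

/-- Some distribution on coalitions of size at most `size` such that every protocol has an output
that, with probability at least `p`, the sampled coalition forces except with probability `e`. -/
def HasRandomCoalition (μs : Fin r → Fin n → Measure Bool) (size e p : ℝ) : Prop :=
  ∃ ν : PMF (Finset (Fin n)), (∀ B ∈ ν.support, (B.card : ℝ) ≤ size) ∧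
    ∀ f : (Fin r → Fin n → Bool) → Bool, ∃ b : Bool,
      p ≤ (ν.toOuterMeasure {B | IB μs f B b ≥ 1 - e}).toReal

theorem HasRandomCoalition.mono (h : HasRandomCoalition μs size e p) (hsize : size ≤ size')
    (he : e ≤ e') (hp : p' ≤ p) : HasRandomCoalition μs size' e' p' := by
  obtain ⟨ν, hB, hν⟩ := h
  refine ⟨ν, fun B hBν => (hB B hBν).trans hsize, fun f => ?_⟩
  obtain ⟨b, hb⟩ := hν f
  refine ⟨b, hp.trans (hb.trans (ENNReal.toReal_mono ?_ ?_))⟩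
  · rw [PMF.toOuterMeasure_apply]
    exact ne_top_of_le_ne_top ν.tsum_coe_ne_top (ENNReal.tsum_le_tsum (Set.indicator_le_self _ _))
  · exact measure_mono fun B (hIB : 1 - e ≤ IB μs f B b) => (by linarith : 1 - e' ≤ IB μs f B b)

theorem hasRandomCoalition_univ (hμ : ∀ i j, IsProbabilityMeasure (μs i j)) :
    HasRandomCoalition μs n 0 1 := by
  classical
  refine ⟨PMF.pure Finset.univ, fun B _ => ?_, fun f => ⟨f fun _ _ => false, ?_⟩⟩
  · simpa using Finset.card_le_univ B
  have hIB : 1 ≤ IB μs f Finset.univ (f fun _ _ => false) := by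
    refine le_trans ?_ (prob_le_IB hμ f Finset.univ (fun _ _ _ => false) _)
    have hexec : ∀ α, execP Finset.univ (fun _ _ _ => false : Strategy n r Finset.univ) α
        = fun _ _ => false := fun α => by ext i j; simp [execP]
    have hW := piWeight_mem_stdSimplex fun i => piWeight_mem_stdSimplex fun j =>
      measureReal_singleton_mem_stdSimplex (μs i j)
    simp only [hexec, prob, ind_of_true, mean_const hW, le_refl]
  rw [PMF.toOuterMeasure_pure_apply, if_pos (by simpa using hIB), ENNReal.toReal_one]

theorem hasRandomCoalition_of_iterate_roundCost_le (hμ : ∀ i j, IsProbabilityMeasure (μs i j))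
    {X : ℕ} (hX : 4 ≤ X) (hn : roundCost^[r] X ≤ n) :
    HasRandomCoalition μs (8 * n / X) (4 / X) (1 / n) := by
  have hX4 : (4 : ℝ) ≤ X := mod_cast hX
  have hX1 : 1 ≤ X := by omega
  have hws := fun i j => measureReal_singleton_mem_stdSimplex (μs i j)
  obtain ⟨Λ, _, ν, B, hν, hB, hcontrols⟩ := exists_random_coalition_controls hX1 r _ hws hn
  obtain ⟨ν', hsupp, hprob⟩ := exists_pmf_of_mem_stdSimplex hν B
  refine ⟨ν', fun B' hB' => ?_, fun f => ?_⟩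
  · obtain ⟨l, rfl⟩ := hsupp B' hB'
    refine (hB l).trans ((sum_div_iterate_roundCost_le hX1 r (by positivity)).trans_eq ?_)
    ring
  obtain ⟨b, hb⟩ := hcontrols f
  refine ⟨b, ?_⟩
  rw [hprob]
  have herror := sum_div_iterate_roundCost_le hX1 r zero_le_two
  have herror1 : 2 * 2 / (X : ℝ) ≤ 1 := (div_le_one (by linarith)).2 (by linarith)
  calc 1 / (n : ℝ) ≤ 1 / (roundCost^[r] X : ℝ) :=
        one_div_le_one_div_of_le (mod_cast one_le_iterate_roundCost hX1 r) (mod_cast hn)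
    _ ≤ _ := hb
    _ ≤ _ := prob_mono hν fun l hl => by
        obtain ⟨π, hπ⟩ := hl.exists_strategy (fun i => by positivity) hws (herror.trans herror1)
        have := hπ.trans (prob_le_IB hμ f (B l) π b)
        linarith

end Measures

section Constants

variable {n r : ℕ}

theorem div_le_mul_mul_four_pow_div {a L : ℝ} (ha : 0 ≤ a) (hL : 0 ≤ L) (hr : 1 ≤ r) :
    a / L ≤ a * r * 4 ^ r / L := by
  have hr' : (1 : ℝ) ≤ r := mod_cast hr
  have h4 : (1 : ℝ) ≤ 4 ^ r := one_le_pow₀ (by norm_num)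
  rw [mul_assoc]
  exact div_le_div_of_nonneg_right
    (le_mul_of_one_le_right ha (one_le_mul_of_one_le_of_one_le hr' h4)) hL

theorem one_div_logb_add_pow_div_le {ε : ℝ} (hε : 0 < ε) (hε1 : ε ≤ 1) (n r : ℕ) :
    (1 / (Real.logb 2 (1 / ε) + r)) ^ r / (n : ℝ) ≤ 1 / n := by
  have hlog : 0 ≤ Real.logb 2 (1 / ε) :=
    Real.logb_nonneg one_lt_two ((one_le_div hε).2 hε1)
  gcongr
  rcases Nat.eq_zero_or_pos r with rfl | hr
  · rw [pow_zero]
  have hr' : (1 : ℝ) ≤ r := mod_cast hr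
  exact pow_le_one₀ (by positivity) ((div_le_one (by linarith)).2 (by linarith))

end Constants

end CoinFlip

open CoinFlip in
theorem multi_round_random_coalition_general {ε : ℝ} (hε : 0 < ε) {n r : ℕ}
    (hr : 4 * r < logStar n) {μs : Fin r → Fin n → Measure Bool}
    (hμ : ∀ i j, IsProbabilityMeasure (μs i j)) :
    HasRandomCoalition μs ((16 + 8 / ε) * n / iterLog (4 * r) n) ε (1 / n) := by
  have hL1 : 1 < iterLog (4 * r) n := one_lt_iterLog hr
  have hn1 : 1 < (n : ℝ) := one_lt_iterLog (x := n) (j := 0) (by omega)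
  set L := iterLog (4 * r) n
  rcases lt_or_ge L (16 + 8 / ε) with hL | hL
  · refine (hasRandomCoalition_univ hμ).mono ?_ hε.le ((div_le_one (by linarith)).2 hn1.le)
    rw [le_div_iff₀ (by linarith)]
    nlinarith
  have hε8 : 0 < 8 / ε := by positivity
  have hfloor : (⌊L⌋₊ : ℝ) ≤ L := Nat.floor_le (by linarith)
  have hfloor8 : 8 ≤ ⌊L⌋₊ := Nat.le_floor (by push_cast; linarith)
  have : (8 : ℝ) ≤ ⌊L⌋₊ := mod_cast hfloor8
  have hLX : L ≤ 2 * ⌊L⌋₊ := by linarith [Nat.lt_floor_add_one L]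
  refine (hasRandomCoalition_of_iterate_roundCost_le hμ (by omega)
    (mod_cast iterate_roundCost_le hfloor8 hr hfloor)).mono ?_ ?_ le_rfl
  · rw [div_le_div_iff₀ (by linarith) (by linarith)]
    nlinarith [mul_pos hε8 (by linarith : (0 : ℝ) < n)]
  · have : 8 ≤ ε * L := by
      rw [mul_comm, ← div_le_iff₀ hε]; linarith
    rw [div_le_iff₀ (by linarith)]
    nlinarith

/-- detailed multi-round theorem: for `m = ⌈C_ε·n·r·4^r/log^{(4r)} n⌉` there is a
distribution `ν` on coalitions of size at most `m`, depending only on `μ` and not on the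
protocol, such that for every protocol `f` there is `b ∈ {0,1}` with
`Pr_{B∼ν}[I_B^b(f) ≥ 1 − ε] ≥ (c_ε/(log(1/ε)+r))^r / n`. -/
theorem multi_round_random_coalition :
    ∀ ε : ℝ, 0 < ε → ε ≤ 1/2 →
    ∃ C c : ℝ, C > 0 ∧ c > 0 ∧
    ∃ n₀ : ℕ, ∀ n : ℕ, n₀ ≤ n →
    ∀ r : ℕ, 1 ≤ r → (r : ℝ) < (logStar n : ℝ) / 5 →
    ∀ μs : Fin r → Fin n → Measure Bool, (∀ i j, IsProbabilityMeasure (μs i j)) →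
    ∃ ν : PMF (Finset (Fin n)),
      (∀ B ∈ ν.support, B.card ≤ ⌈C * n * r * 4 ^ r / iterLog (4 * r) n⌉₊) ∧
      ∀ f : (Fin r → Fin n → Bool) → Bool,
      ∃ b : Bool,
        (ν.toOuterMeasure {B | IB μs f B b ≥ 1 - ε}).toReal
          ≥ (c / (Real.logb 2 (1/ε) + r)) ^ r / n := by
  intro ε hε hε2
  refine ⟨16 + 8 / ε, 1, by positivity, one_pos, 0, fun n _ r hr hrlog μs hμ => ?_⟩
  have hrlog' : 4 * r < logStar n := by
    have : (5 * r : ℝ) < logStar n := by linarith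
    have : 5 * r < logStar n := mod_cast this
    omega
  have hL : 0 < iterLog (4 * r) n := one_pos.trans (CoinFlip.one_lt_iterLog hrlog')
  obtain ⟨ν, hcard, hν⟩ := multi_round_random_coalition_general hε hrlog' hμ
  refine ⟨ν, fun B hB => ?_, fun f => (hν f).imp fun b hb => ?_⟩
  · have hsize := (hcard B hB).trans
      (CoinFlip.div_le_mul_mul_four_pow_div (by positivity) hL.le hr)
    exact_mod_cast hsize.trans (Nat.le_ceil _)
  · exact (CoinFlip.one_div_logb_add_pow_div_le hε (by linarith) n r).trans hb
end

section
/- There is a universal constant C > 0 such that the following holds. Let μ be an arbitrary probability measure on {0,1}^n, let R be a set, let f : {0,1}^n → R, let b ∈ R, let t ≥ 1 be an integer, let ε ∈ (0,1/2] and δ ∈ (0,1/2], and let k be an integer with k ≥ C·(t/δ)·log(2t/ε). Suppose that at least one of the following holds: (Case I) there exists s ≤ t such that Pr_{u∼μ^(s)}[ Pr_{v∼μ^(t)}[ f(u ∨ v) = b ] ≥ 1 − ε/2 ] ≥ δ; (Case II) for every s ≤ t, Pr_{u∼μ^(s)}[ Pr_{v∼μ^(t)}[ f(u ∨ v) = b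 ] ≥ δ ] ≥ 1 − ε/2. Then Pr_{S∼μ^(k)}[ for all ℓ ≤ t, I_S^{b,ℓ}(f) ≥ 1 − ε ] ≥ 1 − ε. -/
open MeasureTheory

/-- Influence of coalition `S` towards value `b`. -/
noncomputable def infl {ι : Type*} {α : Type*} (μ : Measure (ι → Bool))
    (f : (ι → Bool) → α) (S : Finset ι) (b : α) : ℝ :=
  (μ {x | ∃ y, (∀ j ∉ S, y j = x j) ∧ f y = b}).toReal

/-- The boosted measure `μ^(t)`: the distribution of `x¹ ∨ ⋯ ∨ xᵗ` for i.i.d. `xⁱ ∼ μ`. -/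
noncomputable def boost {n : ℕ} (μ : Measure (Fin n → Bool)) (t : ℕ) :
    Measure (Fin n → Bool) :=
  (Measure.pi fun _ : Fin t => μ).map (fun xs i => Finset.univ.sup fun j => xs j i)

/-- The support of `x ∈ {0,1}^n` viewed as a subset of `[n]`. -/
def supp {n : ℕ} (x : Fin n → Bool) : Finset (Fin n) :=
  Finset.univ.filter fun i => x i = true

/-- Coordinatewise OR. -/
def orv {n : ℕ} (x y : Fin n → Bool) : Fin n → Bool := fun i => x i || y i

/-- The boosted influence `I_S^{b,t}(f)` of coalition `S` towards `b`,
measured with respect to `μ^(t)`. -/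
noncomputable def inflB {n : ℕ} {α : Type*} (μ : Measure (Fin n → Bool))
    (f : (Fin n → Bool) → α) (S : Finset (Fin n)) (b : α) (t : ℕ) : ℝ :=
  infl (boost μ t) f S b

/-!
Suppose `A` has probability at least `p` under `μ^(r)` and `m r ≤ k`. Cutting the `k` samples behind
`x ∼ μ^(k)` into `m` disjoint blocks of size `r` shows that `x` fails to dominate every point of `A`
with probability at most `(1 - p)^m`. Dominating points is what creates influence: if `a ≤ x` and
`f (u ∨ a) = b`, then `u` can be steered to the value `b` by changing only coordinates in `supp x`.

In Case I take for `A` the points `z` with `Pr_{v ∼ μ^(ℓ)}[f (z ∨ v) = b] ≥ 1 - ε`. Since `μ^(t)` is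
the law of `w ∨ v` with `w ∼ μ^(t - ℓ)` and `v ∼ μ^(ℓ)`, Markov's inequality gives `A` probability
at least `δ / 2` under `μ^(s + (t - ℓ))`, and dominating a single point of `A` suffices.

In Case II apply the domination bound, for each `u` with `Pr_{a ∼ μ^(t)}[f (u ∨ a) = b] ≥ δ`, to
`{a | f (u ∨ a) = b}`; averaging over `u ∼ μ^(ℓ)` and Markov's inequality in `x` show that most `x`
give large influence. A union bound over `ℓ ≤ t` concludes both cases.
-/

section Probability

variable {α β ι : Type*} [MeasurableSpace α] [MeasurableSpace β]

lemma integral_measureReal_prodMk_left (P : Measure α) (Q : Measure β) [SFinite P]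
    [IsFiniteMeasure Q] {s : Set (α × β)} (hs : MeasurableSet s) :
    ∫ x, Q.real (Prod.mk x ⁻¹' s) ∂P = (P.prod Q).real s := by
  simp only [measureReal_def]
  rw [Measure.prod_apply hs, integral_toReal (measurable_measure_prodMk_left hs).aemeasurable
    (.of_forall fun _ => measure_lt_top _ _)]

lemma integral_measureReal_prodMk_right (P : Measure α) (Q : Measure β) [IsFiniteMeasure P]
    [SFinite Q] {s : Set (α × β)} (hs : MeasurableSet s) :
    ∫ y, P.real ((fun x => (x, y)) ⁻¹' s) ∂Q = (P.prod Q).real s := by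
  simp only [measureReal_def]
  rw [Measure.prod_apply_symm hs, integral_toReal (measurable_measure_prodMk_right hs).aemeasurable
    (.of_forall fun _ => measure_lt_top _ _)]

lemma one_sub_div_le_measureReal_one_sub_le (P : Measure α) [IsProbabilityMeasure P] {g : α → ℝ}
    (hg : Integrable g P) (hg_le : ∀ x, g x ≤ 1) {ε : ℝ} (hε : 0 < ε) :
    1 - (1 - ∫ x, g x ∂P) / ε ≤ P.real {x | 1 - ε ≤ g x} := by
  have markov : ε * P.real {x | ε ≤ 1 - g x} ≤ 1 - ∫ x, g x ∂P := by
    simpa [integral_sub (integrable_const 1) hg] using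
      mul_meas_ge_le_integral_of_nonneg (.of_forall fun x => sub_nonneg.2 (hg_le x))
        ((integrable_const 1).sub hg) ε
  have cover : Set.univ ⊆ {x | 1 - ε ≤ g x} ∪ {x | ε ≤ 1 - g x} := fun x _ =>
    (le_total (1 - ε) (g x)).imp id fun h => by simp only [Set.mem_ofPred_eq]; linarith
  have total : 1 ≤ P.real {x | 1 - ε ≤ g x} + P.real {x | ε ≤ 1 - g x} := by
    simpa using (measureReal_mono (μ := P) cover).trans (measureReal_union_le _ _)
  rw [← le_div_iff₀' hε] at markov
  linarith

lemma one_sub_card_mul_le_measureReal_forall_mem (P : Measure α) [IsProbabilityMeasure P]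
    (s : Finset ι) (p : ι → α → Prop) {c : ℝ} (h : ∀ i ∈ s, P.real {x | ¬ p i x} ≤ c) :
    1 - s.card * c ≤ P.real {x | ∀ i ∈ s, p i x} := by
  have bad : P.real (⋃ i ∈ s, {x | ¬ p i x}) ≤ s.card * c :=
    calc P.real (⋃ i ∈ s, {x | ¬ p i x}) ≤ ∑ i ∈ s, P.real {x | ¬ p i x} :=
          measureReal_biUnion_finset_le _ _
      _ ≤ s.card * c := by simpa using s.sum_le_card_nsmul _ c h
  have cover : Set.univ ⊆ {x | ∀ i ∈ s, p i x} ∪ ⋃ i ∈ s, {x | ¬ p i x} := fun x _ => by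
    by_cases hx : ∀ i ∈ s, p i x
    · exact Or.inl hx
    · exact Or.inr (by simpa using hx)
  have total : 1 ≤ P.real {x | ∀ i ∈ s, p i x} + P.real (⋃ i ∈ s, {x | ¬ p i x}) := by
    simpa using (measureReal_mono (μ := P) cover).trans (measureReal_union_le _ _)
  linarith

end Probability

section Boost

variable {n : ℕ} (μ : Measure (Fin n → Bool)) [IsProbabilityMeasure μ]

instance (t : ℕ) : IsProbabilityMeasure (boost μ t) :=
  Measure.isProbabilityMeasure_map Measurable.of_discrete.aemeasurable

lemma boost_add (s t : ℕ) :
    boost μ (s + t) = ((boost μ s).prod (boost μ t)).map fun p => p.1 ⊔ p.2 := by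
  have split :=
    (measurePreserving_piCongrLeft (fun _ : Fin (s + t) => μ) finSumFinEquiv).comp
      (measurePreserving_sumPiEquivProdPi_symm fun _ : Fin s ⊕ Fin t => μ)
  unfold boost
  rw [← split.map_eq, Measure.map_prod_map _ _ .of_discrete .of_discrete,
    Measure.map_map .of_discrete split.measurable, Measure.map_map .of_discrete .of_discrete]
  congr 1
  ext xs i
  simp only [Function.comp_apply, Finset.sup_univ_eq_iSup, ← finSumFinEquiv.iSup_comp, iSup_sum,
    MeasurableEquiv.piCongrLeft_apply_apply]
  rfl

lemma measureReal_boost_add (s t : ℕ) (A : Set (Fin n → Bool)) :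
    (boost μ (s + t)).real A = ∫ u, (boost μ t).real {v | u ⊔ v ∈ A} ∂boost μ s := by
  rw [boost_add, map_measureReal_apply .of_discrete .of_discrete,
    ← integral_measureReal_prodMk_left _ _ .of_discrete]
  rfl

lemma mul_measureReal_le_measureReal_boost_add {s t : ℕ} {A G : Set (Fin n → Bool)} {c : ℝ}
    (hc : 0 ≤ c) (h : ∀ u ∈ G, c ≤ (boost μ t).real {v | u ⊔ v ∈ A}) :
    c * (boost μ s).real G ≤ (boost μ (s + t)).real A :=
  calc c * (boost μ s).real G
      ≤ c * (boost μ s).real {u | c ≤ (boost μ t).real {v | u ⊔ v ∈ A}} :=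
        mul_le_mul_of_nonneg_left (measureReal_mono h) hc
    _ ≤ ∫ u, (boost μ t).real {v | u ⊔ v ∈ A} ∂boost μ s :=
        mul_meas_ge_le_integral_of_nonneg (.of_forall fun _ => measureReal_nonneg) .of_finite c
    _ = (boost μ (s + t)).real A := (measureReal_boost_add μ s t A).symm

lemma measureReal_boost_add_compl_upperClosure_le (s t : ℕ) (A : Set (Fin n → Bool)) :
    (boost μ (s + t)).real (upperClosure A : Set (Fin n → Bool))ᶜ ≤
      (1 - (boost μ s).real A) * (boost μ t).real (upperClosure A : Set (Fin n → Bool))ᶜ := by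
  rw [boost_add, map_measureReal_apply .of_discrete .of_discrete,
    ← probReal_compl_eq_one_sub .of_discrete, ← measureReal_prod_prod]
  refine measureReal_mono fun p hp => ⟨fun hA => hp ?_, fun hU => hp ?_⟩
  · exact (upperClosure A).upper le_sup_left (subset_upperClosure hA)
  · exact (upperClosure A).upper le_sup_right hU

lemma measureReal_boost_compl_upperClosure_le {r m k : ℕ} (hk : m * r ≤ k)
    {A : Set (Fin n → Bool)} {p : ℝ} (hp : p ≤ (boost μ r).real A) :
    (boost μ k).real (upperClosure A : Set (Fin n → Bool))ᶜ ≤ (1 - p) ^ m := by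
  induction m generalizing k with
  | zero => simp
  | succ m ih =>
    obtain ⟨j, rfl⟩ := Nat.exists_eq_add_of_le (show r ≤ k by nlinarith)
    have hA : (boost μ r).real A ≤ 1 := measureReal_le_one
    calc (boost μ (r + j)).real (upperClosure A : Set (Fin n → Bool))ᶜ
        ≤ (1 - (boost μ r).real A) * (boost μ j).real (upperClosure A : Set (Fin n → Bool))ᶜ :=
          measureReal_boost_add_compl_upperClosure_le μ r j A
      _ ≤ (1 - p) * (1 - p) ^ m := by
          gcongr
          · linarith
          · exact ih (by linarith)
      _ = (1 - p) ^ (m + 1) := (pow_succ' _ _).symm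

end Boost

section Influence

variable {n : ℕ} {R : Type*} (μ : Measure (Fin n → Bool)) (f : (Fin n → Bool) → R) (b : R)

/-- The probability over `v ∼ μ^(t)` that completing the fixed point `u` to `u ∨ v` produces the
value `b`, in terms of which Cases I and II are phrased. The join `u ⊔ v` is definitionally
`orv u v`; the lattice notation gives access to the order. -/
noncomputable def completionProb (t : ℕ) (u : Fin n → Bool) : ℝ :=
  (boost μ t).real {v | f (u ⊔ v) = b}

lemma sup_apply_eq_left_of_notMem_supp {a x : Fin n → Bool} (hax : a ≤ x) (u : Fin n → Bool)
    {j : Fin n} (hj : j ∉ supp x) : (u ⊔ a) j = u j := by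
  have hx : x j = false := by simpa [supp] using hj
  have ha : a j = false := Bool.eq_false_of_le_false (hx ▸ hax j)
  simp [ha]

variable [IsProbabilityMeasure μ]

lemma completionProb_add (s t : ℕ) (u : Fin n → Bool) :
    completionProb μ f b (s + t) u = ∫ w, completionProb μ f b t (u ⊔ w) ∂boost μ s := by
  simp only [completionProb, measureReal_boost_add, Set.mem_ofPred_eq, sup_assoc]

lemma measureReal_mem_upperClosure_le_inflB (ℓ : ℕ) (x : Fin n → Bool) :
    (boost μ ℓ).real {u | x ∈ upperClosure {a | f (u ⊔ a) = b}} ≤ inflB μ f (supp x) b ℓ :=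
  measureReal_mono fun u ⟨a, ha, hax⟩ =>
    ⟨u ⊔ a, fun _ => sup_apply_eq_left_of_notMem_supp hax u, ha⟩

lemma completionProb_le_inflB (ℓ : ℕ) {z x : Fin n → Bool} (hzx : z ≤ x) :
    completionProb μ f b ℓ z ≤ inflB μ f (supp x) b ℓ := by
  refine le_trans (measureReal_mono fun u hu => ?_)
    (measureReal_mem_upperClosure_le_inflB μ f b ℓ x)
  exact ⟨z, by rwa [Set.mem_ofPred_eq, sup_comm], hzx⟩

lemma one_sub_div_le_measureReal_one_sub_le_completionProb {s t : ℕ} {ε η : ℝ} (hε : 0 < ε)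
    {u : Fin n → Bool} (hu : 1 - η ≤ completionProb μ f b (s + t) u) :
    1 - η / ε ≤ (boost μ s).real {w | 1 - ε ≤ completionProb μ f b t (u ⊔ w)} := by
  rw [completionProb_add, sub_le_comm] at hu
  calc 1 - η / ε ≤ 1 - (1 - ∫ w, completionProb μ f b t (u ⊔ w) ∂boost μ s) / ε := by gcongr
    _ ≤ (boost μ s).real {w | 1 - ε ≤ completionProb μ f b t (u ⊔ w)} :=
        one_sub_div_le_measureReal_one_sub_le _ .of_finite (fun _ => measureReal_le_one) hε

lemma measureReal_inflB_lt_le_of_caseI {s t ℓ k m : ℕ} {ε δ : ℝ} (hε : 0 < ε) (hℓ : ℓ ≤ t)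
    (hk : m * (s + t) ≤ k)
    (h : δ ≤ (boost μ s).real {u | 1 - ε / 2 ≤ completionProb μ f b t u}) :
    (boost μ k).real {x | inflB μ f (supp x) b ℓ < 1 - ε} ≤ (1 - δ / 2) ^ m := by
  obtain ⟨r, rfl⟩ := Nat.exists_eq_add_of_le' hℓ
  have hA : δ / 2 ≤ (boost μ (s + r)).real {z | 1 - ε ≤ completionProb μ f b ℓ z} := by
    have half_le (u : Fin n → Bool) (hu : 1 - ε / 2 ≤ completionProb μ f b (r + ℓ) u) :
        1 / 2 ≤ (boost μ r).real {w | 1 - ε ≤ completionProb μ f b ℓ (u ⊔ w)} :=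
      le_of_eq_of_le (by field_simp; norm_num)
        (one_sub_div_le_measureReal_one_sub_le_completionProb μ f b hε hu)
    calc δ / 2 ≤ 1 / 2 * (boost μ s).real {u | 1 - ε / 2 ≤ completionProb μ f b (r + ℓ) u} := by
          linarith
      _ ≤ (boost μ (s + r)).real {z | 1 - ε ≤ completionProb μ f b ℓ z} :=
          mul_measureReal_le_measureReal_boost_add μ one_half_pos.le half_le
  have hblocks : m * (s + r) ≤ k := le_trans (by gcongr; omega) hk
  refine le_trans (measureReal_mono fun x hx => ?_)
    (measureReal_boost_compl_upperClosure_le μ hblocks hA)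
  rintro ⟨z, hz, hzx⟩
  exact (hz.trans (completionProb_le_inflB μ f b ℓ hzx)).not_gt hx

lemma measureReal_le_notMem_upperClosure_add_inflB (ℓ : ℕ) (G : Set (Fin n → Bool))
    (x : Fin n → Bool) :
    (boost μ ℓ).real G ≤
      (boost μ ℓ).real {u | u ∈ G ∧ x ∉ upperClosure {a | f (u ⊔ a) = b}} +
        inflB μ f (supp x) b ℓ := by
  have cover : G ⊆ {u | u ∈ G ∧ x ∉ upperClosure {a | f (u ⊔ a) = b}} ∪
      {u | x ∈ upperClosure {a | f (u ⊔ a) = b}} := fun u hu => (em' _).imp (And.intro hu) id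
  refine (measureReal_mono cover).trans ((measureReal_union_le _ _).trans ?_)
  gcongr
  exact measureReal_mem_upperClosure_le_inflB μ f b ℓ x

lemma half_mul_measureReal_inflB_lt_le_of_caseII {t ℓ k m : ℕ} {ε δ : ℝ} (hε : 0 < ε) (hδ : δ ≤ 1)
    (hk : m * t ≤ k)
    (h : 1 - ε / 2 ≤ (boost μ ℓ).real {u | δ ≤ completionProb μ f b t u}) :
    ε / 2 * (boost μ k).real {x | inflB μ f (supp x) b ℓ < 1 - ε} ≤ (1 - δ) ^ m := by
  set G := {u | δ ≤ completionProb μ f b t u}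
  let missed (u x : Fin n → Bool) : Prop := u ∈ G ∧ x ∉ upperClosure {a | f (u ⊔ a) = b}
  have le_missed (x : Fin n → Bool) (hx : inflB μ f (supp x) b ℓ < 1 - ε) :
      ε / 2 ≤ (boost μ ℓ).real {u | missed u x} := by
    have := h.trans (measureReal_le_notMem_upperClosure_add_inflB μ f b ℓ G x)
    linarith
  have missed_le (u : Fin n → Bool) : (boost μ k).real {x | missed u x} ≤ (1 - δ) ^ m := by
    by_cases hu : u ∈ G
    · simp only [missed, hu, true_and]
      exact measureReal_boost_compl_upperClosure_le μ hk hu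
    · simpa [missed, hu] using pow_nonneg (sub_nonneg.2 hδ) m
  calc ε / 2 * (boost μ k).real {x | inflB μ f (supp x) b ℓ < 1 - ε}
      ≤ ε / 2 * (boost μ k).real {x | ε / 2 ≤ (boost μ ℓ).real {u | missed u x}} :=
        mul_le_mul_of_nonneg_left (measureReal_mono le_missed) (half_pos hε).le
    _ ≤ ∫ x, (boost μ ℓ).real {u | missed u x} ∂boost μ k :=
        mul_meas_ge_le_integral_of_nonneg (.of_forall fun _ => measureReal_nonneg) .of_finite _
    _ = ∫ u, (boost μ k).real {x | missed u x} ∂boost μ ℓ :=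
        (integral_measureReal_prodMk_right _ _ (s := {p | missed p.1 p.2}) .of_discrete).trans
          (integral_measureReal_prodMk_left _ _ .of_discrete).symm
    _ ≤ ∫ _, (1 - δ) ^ m ∂boost μ ℓ := integral_mono .of_finite .of_finite missed_le
    _ = (1 - δ) ^ m := by simp

end Influence

section Numerics

lemma one_sub_pow_le_inv_sq {m : ℕ} {p x : ℝ} (hp : p ≤ 1) (hx : 0 < x)
    (h : 2 * Real.log x ≤ m * p) : (1 - p) ^ m ≤ x⁻¹ ^ 2 :=
  calc (1 - p) ^ m ≤ Real.exp (-p) ^ m :=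
        pow_le_pow_left₀ (sub_nonneg.2 hp) (Real.one_sub_le_exp_neg p) m
    _ = Real.exp (-(m * p)) := by rw [← Real.exp_nat_mul, mul_neg]
    _ ≤ Real.exp (-(2 * Real.log x)) := by gcongr
    _ = x⁻¹ ^ 2 := by
        rw [← mul_neg, ← Real.log_inv]
        exact_mod_cast (Real.exp_nat_mul _ 2).trans (by rw [Real.exp_log (inv_pos.2 hx)])

lemma two_mul_le_natDiv_mul {t k : ℕ} {δ L : ℝ} (ht : 0 < t) (hδ : 0 < δ) (hδ1 : δ ≤ 1)
    (hL : 1 ≤ L) (hk : 16 * (t / δ) * L ≤ k) : 2 * L ≤ (k / (2 * t) : ℕ) * (δ / 2) := by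
  have floor : (k : ℝ) < 2 * t * ((k / (2 * t) : ℕ) + 1) := by
    exact_mod_cast Nat.lt_mul_div_succ k (show 0 < 2 * t by omega)
  have ht' : (0 : ℝ) < 2 * t := by positivity
  have scaled : 2 * t * (8 * L) < 2 * t * (((k / (2 * t) : ℕ) + 1) * δ) :=
    calc 2 * t * (8 * L) = 16 * (t / δ) * L * δ := by field_simp; norm_num
      _ < 2 * t * ((k / (2 * t) : ℕ) + 1) * δ := mul_lt_mul_of_pos_right (hk.trans_lt floor) hδ
      _ = _ := by ring
  have := lt_of_mul_lt_mul_left scaled ht'.le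
  linarith

lemma one_sub_half_pow_natDiv_le {t k : ℕ} {ε δ : ℝ} (ht : 1 ≤ t) (hε : 0 < ε) (hε1 : ε ≤ 1)
    (hδ : 0 < δ) (hδ1 : δ ≤ 1) (hk : 16 * (t / δ) * Real.logb 2 (2 * t / ε) ≤ k) :
    (1 - δ / 2) ^ (k / (2 * t)) ≤ ε / 2 * (ε / t) := by
  have ht' : (1 : ℝ) ≤ t := by exact_mod_cast ht
  have hx : 2 ≤ 2 * t / ε := by rw [le_div_iff₀ hε]; nlinarith
  have hlogb : 1 ≤ Real.logb 2 (2 * t / ε) := by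
    rwa [Real.le_logb_iff_rpow_le one_lt_two (by positivity), Real.rpow_one]
  have hlog : Real.log (2 * t / ε) ≤ Real.logb 2 (2 * t / ε) :=
    le_div_self (Real.log_nonneg (by linarith)) (Real.log_pos one_lt_two)
      (by linarith [Real.log_two_lt_d9])
  calc (1 - δ / 2) ^ (k / (2 * t)) ≤ (2 * t / ε)⁻¹ ^ 2 :=
        one_sub_pow_le_inv_sq (by linarith) (by positivity) <|
          le_trans (by gcongr) (two_mul_le_natDiv_mul ht hδ hδ1 hlogb hk)
    _ = ε / 2 * (ε / (2 * t * t)) := by field_simp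
    _ ≤ ε / 2 * (ε / t) := by gcongr; nlinarith

end Numerics

lemma measureReal_inflB_lt_le {n : ℕ} {R : Type*} (μ : Measure (Fin n → Bool))
    [IsProbabilityMeasure μ] (f : (Fin n → Bool) → R) (b : R) {t k ℓ : ℕ} {ε δ : ℝ}
    (hε : 0 < ε) (hε1 : ε ≤ 1) (hδ : 0 < δ)
    (hk : 16 * (t / δ) * Real.logb 2 (2 * t / ε) ≤ k) (hℓ : 1 ≤ ℓ) (hℓt : ℓ ≤ t)
    (h : (∃ s ≤ t, δ ≤ (boost μ s).real {u | 1 - ε / 2 ≤ completionProb μ f b t u}) ∨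
      1 - ε / 2 ≤ (boost μ ℓ).real {u | δ ≤ completionProb μ f b t u}) :
    (boost μ k).real {x | inflB μ f (supp x) b ℓ < 1 - ε} ≤ ε / t := by
  have blocks : k / (2 * t) * (2 * t) ≤ k := Nat.div_mul_le_self k (2 * t)
  have numeric (hδ1 : δ ≤ 1) := one_sub_half_pow_natDiv_le (hℓ.trans hℓt) hε hε1 hδ hδ1 hk
  refine le_of_mul_le_mul_left ?_ (half_pos hε)
  rcases h with ⟨s, hst, hs⟩ | h
  · have hδ1 : δ ≤ 1 := hs.trans measureReal_le_one
    calc _ ≤ 1 * (boost μ k).real {x | inflB μ f (supp x) b ℓ < 1 - ε} := by gcongr; linarith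
      _ ≤ (1 - δ / 2) ^ (k / (2 * t)) := by
          rw [one_mul]
          exact measureReal_inflB_lt_le_of_caseI μ f b hε hℓt
            (le_trans (by gcongr; omega) blocks) hs
      _ ≤ ε / 2 * (ε / t) := numeric hδ1
  · obtain ⟨u, hu⟩ : {u | δ ≤ completionProb μ f b t u}.Nonempty :=
      nonempty_of_measureReal_ne_zero (μ := boost μ ℓ) (by linarith)
    have hδ1 : δ ≤ 1 := hu.trans measureReal_le_one
    calc _ ≤ (1 - δ) ^ (k / (2 * t)) :=
          half_mul_measureReal_inflB_lt_le_of_caseII μ f b hε hδ1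
            (le_trans (by gcongr; omega) blocks) h
      _ ≤ (1 - δ / 2) ^ (k / (2 * t)) := by gcongr; linarith
      _ ≤ ε / 2 * (ε / t) := numeric hδ1

theorem case_I_II_lemma_general {n : ℕ} {R : Type*} (μ : Measure (Fin n → Bool))
    [IsProbabilityMeasure μ] (f : (Fin n → Bool) → R) (b : R) {t k : ℕ} {ε δ : ℝ}
    (hε : 0 < ε) (hδ : 0 < δ) (hk : 16 * (t / δ) * Real.logb 2 (2 * t / ε) ≤ k)
    (h : (∃ s ≤ t, δ ≤ (boost μ s).real {u | 1 - ε / 2 ≤ completionProb μ f b t u}) ∨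
      ∀ s, 1 ≤ s → s ≤ t → 1 - ε / 2 ≤ (boost μ s).real {u | δ ≤ completionProb μ f b t u}) :
    1 - ε ≤ (boost μ k).real {x | ∀ ℓ, 1 ≤ ℓ → ℓ ≤ t → 1 - ε ≤ inflB μ f (supp x) b ℓ} := by
  rcases le_or_gt 1 ε with hε1 | hε1
  · exact (sub_nonpos.2 hε1).trans measureReal_nonneg
  have fail_le (ℓ : ℕ) (hℓ : ℓ ∈ Finset.Icc 1 t) :
      (boost μ k).real {x | ¬ 1 - ε ≤ inflB μ f (supp x) b ℓ} ≤ ε / t := by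
    obtain ⟨hℓ, hℓt⟩ := Finset.mem_Icc.1 hℓ
    simp only [not_le]
    exact measureReal_inflB_lt_le μ f b hε hε1.le hδ hk hℓ hℓt (h.imp_right fun h => h ℓ hℓ hℓt)
  have budget : t * (ε / t) ≤ ε := by
    rw [mul_div_left_comm]
    exact mul_le_of_le_one_right hε.le (div_self_le_one _)
  have union_bound := one_sub_card_mul_le_measureReal_forall_mem (boost μ k) _ _ fail_le
  simp only [Finset.mem_Icc, and_imp, Nat.card_Icc, Nat.add_sub_cancel] at union_bound
  linarith

/-- Lemma: Case I / Case II for general ranges: if Case I or Case II holds for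
`b`, then with probability `≥ 1 - ε` a random coalition `S ∼ μ^(k)` satisfies
`I_S^{b,ℓ}(f) ≥ 1 - ε` simultaneously for all `1 ≤ ℓ ≤ t`. -/
theorem case_I_II_lemma :
    ∃ C : ℝ, C > 0 ∧
      ∀ n : ℕ, ∀ μ : Measure (Fin n → Bool), IsProbabilityMeasure μ →
      ∀ (R : Type) (f : (Fin n → Bool) → R) (b : R),
      ∀ t : ℕ, 1 ≤ t →
      ∀ ε δ : ℝ, 0 < ε → ε ≤ 1/2 → 0 < δ → δ ≤ 1/2 →
      ∀ k : ℕ, (k : ℝ) ≥ C * ((t : ℝ)/δ) * Real.logb 2 (2*t/ε) →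
      -- Case I
      ((∃ s : ℕ, 1 ≤ s ∧ s ≤ t ∧
          ((boost μ s) {u | ((boost μ t) {v | f (orv u v) = b}).toReal ≥ 1 - ε/2}).toReal ≥ δ) ∨
      -- Case II
       (∀ s : ℕ, 1 ≤ s → s ≤ t →
          ((boost μ s) {u | ((boost μ t) {v | f (orv u v) = b}).toReal ≥ δ}).toReal ≥ 1 - ε/2)) →
      ((boost μ k) {x | ∀ ℓ : ℕ, 1 ≤ ℓ → ℓ ≤ t → inflB μ f (supp x) b ℓ ≥ 1 - ε}).toReal
        ≥ 1 - ε := by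
  refine ⟨16, by norm_num, fun n μ _ R f b t _ ε δ hε _ hδ _ k hk h => ?_⟩
  exact case_I_II_lemma_general μ f b hε hδ hk (h.imp_left fun ⟨s, _, hs⟩ => ⟨s, hs⟩)
end
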